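/- arXiv:1601.08073 — 3 statements merged into one kernel-verified Lean document; each statement's English description precedes it below -/
import Mathlib

section
/- The operator T defined on K by T(u,v)(t) = (∫₀¹ k₁(t,s) f₁(s,u(s),v(s)) ds, ∫₀¹ k₂(t,s) f₂(s,u(s),v(s)) ds) maps the cone K into K: for every (u,v) ∈ K, both components of T(u,v) are continuous on [0,1], min_{t∈[a₁,b₁]} (T(u,v))₁(t) ≥ c₁‖(T(u,v))₁‖_∞ and min_{t∈[a₂,b₂]} (T(u,v))₂(t) ≥ c₂‖(T(u,v))₂‖_∞. -/
open MeasureTheory Set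

noncomputable def supNorm (w : ℝ → ℝ) : ℝ := ⨆ t : Set.Icc (0:ℝ) 1, |w t.1|

noncomputable def infOn (a b : ℝ) (w : ℝ → ℝ) : ℝ := ⨅ t : Set.Icc a b, w t.1

/-- Membership in the cone `K ⊆ C[0,1] × C[0,1]`. -/
def inCone (a₁ b₁ c₁ a₂ b₂ c₂ : ℝ) (u v : ℝ → ℝ) : Prop :=
  ContinuousOn u (Set.Icc 0 1) ∧ ContinuousOn v (Set.Icc 0 1) ∧
    c₁ * supNorm u ≤ infOn a₁ b₁ u ∧ c₂ * supNorm v ≤ infOn a₂ b₂ v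

/-- `(u, v)` solves the system of Hammerstein integral equations (*). -/
def isSolution (k₁ k₂ : ℝ → ℝ → ℝ) (f₁ f₂ : ℝ → ℝ → ℝ → ℝ) (u v : ℝ → ℝ) : Prop :=
  (∀ t ∈ Set.Icc (0:ℝ) 1, u t = ∫ s in (0:ℝ)..1, k₁ t s * f₁ s (u s) (v s)) ∧
    (∀ t ∈ Set.Icc (0:ℝ) 1, v t = ∫ s in (0:ℝ)..1, k₂ t s * f₂ s (u s) (v s))

/-- `(u, v)` is a nontrivial solution of (*) lying in the cone. -/
def nontrivialSolution (k₁ k₂ : ℝ → ℝ → ℝ) (f₁ f₂ : ℝ → ℝ → ℝ → ℝ)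
    (a₁ b₁ c₁ a₂ b₂ c₂ : ℝ) (u v : ℝ → ℝ) : Prop :=
  inCone a₁ b₁ c₁ a₂ b₂ c₂ u v ∧ isSolution k₁ k₂ f₁ f₂ u v ∧
    0 < max (supNorm u) (supNorm v)

/-- Condition `(I¹_{ρ₁,ρ₂})`. -/
def condI1 (f₁ f₂ : ℝ → ℝ → ℝ → ℝ) (m₁ m₂ ρ₁ ρ₂ : ℝ) : Prop :=
  ∀ t ∈ Set.Icc (0:ℝ) 1, ∀ x ∈ Set.Icc (-ρ₁) ρ₁, ∀ y ∈ Set.Icc (-ρ₂) ρ₂,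
    f₁ t x y < m₁ * ρ₁ ∧ f₂ t x y < m₂ * ρ₂

/-- Condition `(I⁰_{ρ₁,ρ₂})`. -/
def condI0 (f₁ f₂ : ℝ → ℝ → ℝ → ℝ) (a₁ b₁ c₁ a₂ b₂ c₂ M₁ M₂ ρ₁ ρ₂ : ℝ) : Prop :=
  (∀ t ∈ Set.Icc a₁ b₁, ∀ x ∈ Set.Icc ρ₁ (ρ₁ / c₁), ∀ y ∈ Set.Icc (-(ρ₂ / c₂)) (ρ₂ / c₂),
      M₁ * ρ₁ < f₁ t x y) ∧
    (∀ t ∈ Set.Icc a₂ b₂, ∀ x ∈ Set.Icc (-(ρ₁ / c₁)) (ρ₁ / c₁), ∀ y ∈ Set.Icc ρ₂ (ρ₂ / c₂),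
      M₂ * ρ₂ < f₂ t x y)

/-- Condition `(I⁰_{ρ₁,ρ₂})⋆`. -/
def condI0star (f₁ f₂ : ℝ → ℝ → ℝ → ℝ) (a₁ b₁ c₁ a₂ b₂ c₂ M₁ M₂ ρ₁ ρ₂ : ℝ) : Prop :=
  (∀ t ∈ Set.Icc a₁ b₁, ∀ x ∈ Set.Icc 0 (ρ₁ / c₁), ∀ y ∈ Set.Icc (-(ρ₂ / c₂)) (ρ₂ / c₂),
      M₁ * ρ₁ < f₁ t x y) ∨
    (∀ t ∈ Set.Icc a₂ b₂, ∀ x ∈ Set.Icc (-(ρ₁ / c₁)) (ρ₁ / c₁), ∀ y ∈ Set.Icc 0 (ρ₂ / c₂),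
      M₂ * ρ₂ < f₂ t x y)

theorem cone_aux (k : ℝ → ℝ → ℝ) (h Φ : ℝ → ℝ) (a b c : ℝ)
    (hk : ContinuousOn (fun p : ℝ × ℝ => k p.1 p.2) (Set.Icc 0 1 ×ˢ Set.Icc 0 1))
    (ha : 0 ≤ a) (hab : a ≤ b) (hb : b ≤ 1) (hc : c ∈ Set.Ioc (0:ℝ) 1)
    (hΦm : Measurable Φ)
    (hΦb : ∃ C : ℝ, ∀ᵐ s ∂(volume.restrict (Set.Icc (0:ℝ) 1)), |Φ s| ≤ C)
    (hub : ∀ t ∈ Set.Icc (0:ℝ) 1, ∀ᵐ s ∂(volume.restrict (Set.Icc (0:ℝ) 1)), |k t s| ≤ Φ s)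
    (hlb : ∀ t ∈ Set.Icc a b, ∀ᵐ s ∂(volume.restrict (Set.Icc (0:ℝ) 1)), c * Φ s ≤ k t s)
    (hh : ContinuousOn h (Set.Icc 0 1)) (hnn : ∀ s ∈ Set.Icc (0:ℝ) 1, 0 ≤ h s) :
    ContinuousOn (fun t => ∫ s in (0:ℝ)..1, k t s * h s) (Set.Icc 0 1) ∧
    c * supNorm (fun t => ∫ s in (0:ℝ)..1, k t s * h s) ≤
      infOn a b (fun t => ∫ s in (0:ℝ)..1, k t s * h s) := by
  have e : ∀ t, (∫ s in (0:ℝ)..1, k t s * h s) = ∫ s in Set.Icc (0:ℝ) 1, k t s * h s := by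
    intro t
    rw [intervalIntegral.integral_of_le zero_le_one, integral_Icc_eq_integral_Ioc]
  simp only [e]
  have hhi : IntegrableOn h (Set.Icc 0 1) := hh.integrableOn_Icc
  obtain ⟨C, hC⟩ := hΦb
  have hbi : Integrable (fun s => Φ s * h s) (volume.restrict (Set.Icc (0:ℝ) 1)) :=
    Integrable.bdd_mul hhi hΦm.aestronglyMeasurable (c := C) hC
  have hks : ∀ t ∈ Set.Icc (0:ℝ) 1, ContinuousOn (fun s => k t s * h s) (Set.Icc 0 1) := by
    intro t ht
    refine ContinuousOn.mul ?_ hh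
    exact hk.comp (f := fun s : ℝ => (t, s)) (by fun_prop) (fun s hs => ⟨ht, hs⟩)
  have hki : ∀ t ∈ Set.Icc (0:ℝ) 1, IntegrableOn (fun s => k t s * h s) (Set.Icc 0 1) :=
    fun t ht => (hks t ht).integrableOn_Icc
  have hmem : ∀ᵐ s ∂(volume.restrict (Set.Icc (0:ℝ) 1)), s ∈ Set.Icc (0:ℝ) 1 :=
    ae_restrict_mem measurableSet_Icc
  have hbd : ∀ t ∈ Set.Icc (0:ℝ) 1, ∀ᵐ s ∂(volume.restrict (Set.Icc (0:ℝ) 1)),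
      ‖k t s * h s‖ ≤ Φ s * h s := by
    intro t ht
    filter_upwards [hub t ht, hmem] with s h1 h2
    rw [norm_mul, Real.norm_eq_abs, Real.norm_eq_abs, abs_of_nonneg (hnn s h2)]
    exact mul_le_mul_of_nonneg_right h1 (hnn s h2)
  constructor
  · refine continuousOn_of_dominated (bound := fun s => Φ s * h s) ?_ hbd hbi ?_
    · exact fun t ht => (hki t ht).aestronglyMeasurable
    · filter_upwards [hmem] with s hs
      refine ContinuousOn.mul ?_ continuousOn_const
      exact hk.comp (f := fun t : ℝ => (t, s)) (by fun_prop) (fun t ht => ⟨ht, hs⟩)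
  · haveI : Nonempty (Set.Icc (0:ℝ) 1) := ⟨⟨0, by simp⟩⟩
    haveI : Nonempty (Set.Icc a b) := ⟨⟨a, le_rfl, hab⟩⟩
    have h1 : supNorm (fun t => ∫ s in Set.Icc (0:ℝ) 1, k t s * h s) ≤
        ∫ s in Set.Icc (0:ℝ) 1, Φ s * h s := by
      refine ciSup_le fun t => ?_
      exact norm_integral_le_of_norm_le hbi (hbd t.1 t.2)
    refine (mul_le_mul_of_nonneg_left h1 hc.1.le).trans ?_
    refine le_ciInf fun t => ?_
    rw [← integral_const_mul]
    refine integral_mono_ae (hbi.const_mul c)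
      (hki t.1 ⟨ha.trans t.2.1, t.2.2.trans hb⟩) ?_
    filter_upwards [hlb t.1 t.2, hmem] with s h1 h2
    have := mul_le_mul_of_nonneg_right h1 (hnn s h2)
    simpa [mul_assoc] using this

theorem cone_invariance
    (k₁ k₂ : ℝ → ℝ → ℝ) (f₁ f₂ : ℝ → ℝ → ℝ → ℝ) (Φ₁ Φ₂ : ℝ → ℝ)
    (a₁ b₁ c₁ a₂ b₂ c₂ : ℝ)
    (hk₁ : ContinuousOn (fun p : ℝ × ℝ => k₁ p.1 p.2) (Set.Icc 0 1 ×ˢ Set.Icc 0 1))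
    (hk₂ : ContinuousOn (fun p : ℝ × ℝ => k₂ p.1 p.2) (Set.Icc 0 1 ×ˢ Set.Icc 0 1))
    (ha₁ : 0 ≤ a₁) (hab₁ : a₁ ≤ b₁) (hb₁ : b₁ ≤ 1)
    (ha₂ : 0 ≤ a₂) (hab₂ : a₂ ≤ b₂) (hb₂ : b₂ ≤ 1)
    (hc₁ : c₁ ∈ Set.Ioc (0:ℝ) 1) (hc₂ : c₂ ∈ Set.Ioc (0:ℝ) 1)
    (hΦ₁meas : Measurable Φ₁) (hΦ₂meas : Measurable Φ₂)
    (hΦ₁nn : ∀ s ∈ Set.Icc (0:ℝ) 1, 0 ≤ Φ₁ s) (hΦ₂nn : ∀ s ∈ Set.Icc (0:ℝ) 1, 0 ≤ Φ₂ s)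
    (hΦ₁bdd : ∃ C : ℝ, ∀ᵐ s ∂(volume.restrict (Set.Icc (0:ℝ) 1)), |Φ₁ s| ≤ C)
    (hΦ₂bdd : ∃ C : ℝ, ∀ᵐ s ∂(volume.restrict (Set.Icc (0:ℝ) 1)), |Φ₂ s| ≤ C)
    (hΦ₁pos : 0 < ∫ s in a₁..b₁, Φ₁ s) (hΦ₂pos : 0 < ∫ s in a₂..b₂, Φ₂ s)
    (hub₁ : ∀ t ∈ Set.Icc (0:ℝ) 1, ∀ᵐ s ∂(volume.restrict (Set.Icc (0:ℝ) 1)), |k₁ t s| ≤ Φ₁ s)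
    (hub₂ : ∀ t ∈ Set.Icc (0:ℝ) 1, ∀ᵐ s ∂(volume.restrict (Set.Icc (0:ℝ) 1)), |k₂ t s| ≤ Φ₂ s)
    (hlb₁ : ∀ t ∈ Set.Icc a₁ b₁, ∀ᵐ s ∂(volume.restrict (Set.Icc (0:ℝ) 1)), c₁ * Φ₁ s ≤ k₁ t s)
    (hlb₂ : ∀ t ∈ Set.Icc a₂ b₂, ∀ᵐ s ∂(volume.restrict (Set.Icc (0:ℝ) 1)), c₂ * Φ₂ s ≤ k₂ t s)
    (hf₁ : ContinuousOn (fun p : ℝ × ℝ × ℝ => f₁ p.1 p.2.1 p.2.2)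
      (Set.Icc 0 1 ×ˢ (Set.univ : Set (ℝ × ℝ))))
    (hf₂ : ContinuousOn (fun p : ℝ × ℝ × ℝ => f₂ p.1 p.2.1 p.2.2)
      (Set.Icc 0 1 ×ˢ (Set.univ : Set (ℝ × ℝ))))
    (hf₁nn : ∀ t ∈ Set.Icc (0:ℝ) 1, ∀ x y : ℝ, 0 ≤ f₁ t x y)
    (hf₂nn : ∀ t ∈ Set.Icc (0:ℝ) 1, ∀ x y : ℝ, 0 ≤ f₂ t x y)
    :
    ∀ u v : ℝ → ℝ, inCone a₁ b₁ c₁ a₂ b₂ c₂ u v →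
      inCone a₁ b₁ c₁ a₂ b₂ c₂
        (fun t => ∫ s in (0:ℝ)..1, k₁ t s * f₁ s (u s) (v s))
        (fun t => ∫ s in (0:ℝ)..1, k₂ t s * f₂ s (u s) (v s)) := by
  intro u v huv
  obtain ⟨hu, hv, -, -⟩ := huv
  have key : ∀ f : ℝ → ℝ → ℝ → ℝ, ContinuousOn (fun p : ℝ × ℝ × ℝ => f p.1 p.2.1 p.2.2)
      (Set.Icc 0 1 ×ˢ (Set.univ : Set (ℝ × ℝ))) →
      ContinuousOn (fun s => f s (u s) (v s)) (Set.Icc 0 1) := by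
    intro f hf
    exact hf.comp (f := fun s : ℝ => (s, u s, v s))
      (continuousOn_id.prodMk (hu.prodMk hv)) (fun s hs => ⟨hs, trivial⟩)
  have A := cone_aux k₁ (fun s => f₁ s (u s) (v s)) Φ₁ a₁ b₁ c₁ hk₁ ha₁ hab₁ hb₁ hc₁ hΦ₁meas
    hΦ₁bdd hub₁ hlb₁ (key f₁ hf₁) (fun s hs => hf₁nn s hs _ _)
  have B := cone_aux k₂ (fun s => f₂ s (u s) (v s)) Φ₂ a₂ b₂ c₂ hk₂ ha₂ hab₂ hb₂ hc₂ hΦ₂meas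
    hΦ₂bdd hub₂ hlb₂ (key f₂ hf₂) (fun s hs => hf₂nn s hs _ _)
  exact ⟨A.1, B.1, A.2, B.2⟩
end

section
/- (Existence, case (S₁)) Suppose there exist ρ₁,ρ₂,r₁,r₂ ∈ (0,∞) with ρ₁/c₁ < r₁ and ρ₂/c₂ < r₂ such that condition (I⁰_{ρ₁,ρ₂}) holds and condition (I¹_{r₁,r₂}) holds. Then the system (*) has at least one nontrivial solution in K. -/
open MeasureTheory Set

/-- `det (1 + t A)` at `t = 1` is a fixed affine combination of its values at given nodes. -/
lemma brw_det_interp {E : Type*} [NormedAddCommGroup E] [NormedSpace ℝ E] [FiniteDimensional ℝ E]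
    (v : ℕ → ℝ) (hv : Function.Injective v) :
    ∃ L : ℕ → ℝ, (∑ i ∈ Finset.range (Module.finrank ℝ E + 1), L i = 1) ∧
      ∀ A : E →L[ℝ] E, (ContinuousLinearMap.id ℝ E + A).det =
        ∑ i ∈ Finset.range (Module.finrank ℝ E + 1),
          L i * (ContinuousLinearMap.id ℝ E + v i • A).det := by
  classical
  set d := Module.finrank ℝ E
  set s := Finset.range (d + 1)
  refine ⟨fun i => (Lagrange.basis s v i).eval 1, ?_, ?_⟩
  · have h := Lagrange.sum_basis (s := s) (v := v) hv.injOn ⟨0, by simp [s]⟩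
    have := congrArg (Polynomial.eval 1) h
    simpa [Polynomial.eval_finsetSum] using this
  · intro A
    let b := Module.finBasis ℝ E
    let M := LinearMap.toMatrix b b (A : E →ₗ[ℝ] E)
    let p : Polynomial ℝ := Matrix.det ((Polynomial.X : Polynomial ℝ) • M.map Polynomial.C
      + (1 : Matrix (Fin d) (Fin d) ℝ).map Polynomial.C)
    have hp : ∀ t : ℝ, p.eval t = (ContinuousLinearMap.id ℝ E + t • A).det := by
      intro t
      have e1 : (ContinuousLinearMap.id ℝ E + t • A).det = Matrix.det (1 + t • M) := by
        rw [ContinuousLinearMap.det, ← LinearMap.det_toMatrix b]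
        congr 1
        have : ((ContinuousLinearMap.id ℝ E + t • A : E →L[ℝ] E) : E →ₗ[ℝ] E)
          = LinearMap.id + t • (A : E →ₗ[ℝ] E) := rfl
        rw [this]
        simp [M]
      rw [e1]
      simp only [p]
      rw [← Polynomial.coe_evalRingHom, RingHom.map_det]
      congr 1
      ext i j
      simp [Matrix.one_apply]
      split_ifs <;> simp <;> ring
    have hdeg : p.degree < s.card := by
      have h1 := Polynomial.natDegree_det_X_add_C_le M (1 : Matrix (Fin d) (Fin d) ℝ)
      have h2 : p.natDegree ≤ d := by rw [Fintype.card_fin] at h1; exact h1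
      calc p.degree ≤ p.natDegree := Polynomial.degree_le_natDegree
        _ ≤ (d : WithBot ℕ) := by exact_mod_cast h2
        _ < s.card := by simp [s]; exact_mod_cast Nat.lt_succ_self d
    have h3 := Lagrange.eq_interpolate (f := p) (s := s) (v := v) hv.injOn hdeg
    have h4 := congrArg (Polynomial.eval 1) h3
    rw [hp 1, one_smul] at h4
    rw [h4]
    simp [Lagrange.interpolate_apply, Polynomial.eval_finsetSum, hp, mul_comm]

/-- No `C¹` retraction of the closed ball onto the sphere. -/
lemma brw_no_retraction {E : Type*} [NormedAddCommGroup E] [InnerProductSpace ℝ E]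
    [FiniteDimensional ℝ E] (r : E → E)
    (hr : ∀ x : E, ‖x‖ ≤ 1 → ContDiffAt ℝ 1 r x)
    (hn : ∀ x : E, ‖x‖ ≤ 1 → ‖r x‖ = 1) (hs : ∀ x : E, ‖x‖ = 1 → r x = x) : False := by
  classical
  let _ : MeasurableSpace E := borel E
  have _ : BorelSpace E := ⟨rfl⟩
  let μ : Measure E := volume
  let g : E → E := fun x => r x - x
  let g' : E → E →L[ℝ] E := fun x => fderiv ℝ r x - ContinuousLinearMap.id ℝ E
  have hrd : ∀ x : E, ‖x‖ ≤ 1 → HasFDerivAt r (fderiv ℝ r x) x := fun x hx =>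
    ((hr x hx).differentiableAt (by norm_num)).hasFDerivAt
  have hg : ∀ x : E, ‖x‖ ≤ 1 → HasFDerivAt g (g' x) x := fun x hx =>
    (hrd x hx).sub (hasFDerivAt_id x)
  have hg'c : ContinuousOn g' (Metric.closedBall 0 1) := by
    intro x hx
    have hx' : ‖x‖ ≤ 1 := by simpa using hx
    have : ContDiffAt ℝ 0 (fderiv ℝ r) x := (hr x hx').fderiv_right (by norm_num)
    exact (this.continuousAt.sub continuousAt_const).continuousWithinAt
  obtain ⟨C, hC⟩ := (isCompact_closedBall (0:E) 1).exists_bound_of_continuousOn hg'c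
  let C' : NNReal := ⟨max C 1, by positivity⟩
  have hC' : ∀ x : E, ‖x‖ ≤ 1 → ‖g' x‖₊ ≤ C' := fun x hx => by
    have := hC x (by simpa using hx)
    exact (show ‖g' x‖ ≤ max C 1 from this.trans (le_max_left _ _))
  have hlip : LipschitzOnWith C' g (Metric.closedBall 0 1) :=
    (convex_closedBall (0:E) 1).lipschitzOnWith_of_nnnorm_hasFDerivWithin_le
      (fun x hx => (hg x (by simpa using hx)).hasFDerivWithinAt)
      (fun x hx => hC' x (by simpa using hx))
  -- extension by zero
  let G : E → E := fun x => if ‖x‖ ≤ 1 then g x else 0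
  have hGin : ∀ x, ‖x‖ ≤ 1 → G x = g x := fun x hx => by simp [G, hx]
  have hGout : ∀ x, 1 ≤ ‖x‖ → G x = 0 := fun x hx => by
    by_cases h : ‖x‖ ≤ 1
    · simp [G, h, g, hs x (le_antisymm h hx)]
    · simp [G, h]
  have hGmix : ∀ x y : E, ‖x‖ ≤ 1 → 1 ≤ ‖y‖ → dist (G x) (G y) ≤ C' * dist x y := by
    intro x y hx hy
    obtain ⟨z, hz, hz1⟩ : ∃ z ∈ segment ℝ x y, ‖z‖ = 1 := by
      have := (convex_segment (𝕜 := ℝ) x y).isPreconnected.intermediate_value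
        (left_mem_segment ℝ x y) (right_mem_segment ℝ x y) (f := fun z => ‖z‖)
        continuous_norm.continuousOn
      obtain ⟨z, hz, h⟩ := this ⟨hx, hy⟩
      exact ⟨z, hz, h⟩
    have h1 : G y = g z := by rw [hGout y hy]; simp [g, hs z hz1]
    rw [hGin x hx, h1]
    have h2 := hlip.dist_le_mul x (by simpa using hx) z (by simp [hz1])
    refine h2.trans ?_
    gcongr
    have := dist_add_dist_of_mem_segment hz
    have := dist_nonneg (x := z) (y := y)
    linarith
  have hGlip : ∀ x y : E, dist (G x) (G y) ≤ C' * dist x y := by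
    intro x y
    rcases le_total ‖x‖ 1 with hx | hx <;> rcases le_total ‖y‖ 1 with hy | hy
    · rw [hGin x hx, hGin y hy]
      exact hlip.dist_le_mul x (by simpa using hx) y (by simpa using hy)
    · exact hGmix x y hx hy
    · rw [dist_comm, dist_comm x y]; exact hGmix y x hy hx
    · rw [hGout x hx, hGout y hy, dist_self]; positivity
  have hC1 : (1:ℝ) ≤ C' := le_max_right _ _
  -- smallness
  obtain ⟨δ, hδ, hdet⟩ : ∃ δ > 0, ∀ B : E →L[ℝ] E, ‖B‖ < δ →
      0 < (ContinuousLinearMap.id ℝ E + B).det := by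
    have hc : Continuous fun B : E →L[ℝ] E => (ContinuousLinearMap.id ℝ E + B).det :=
      (ContinuousLinearMap.continuous_det).comp (continuous_const.add continuous_id)
    have h0 : ∀ᶠ B in nhds (0 : E →L[ℝ] E), 0 < (ContinuousLinearMap.id ℝ E + B).det := by
      apply hc.continuousAt.eventually_const_lt
      simp [ContinuousLinearMap.det]
    obtain ⟨δ, hδ, h⟩ := Metric.eventually_nhds_iff.1 h0
    exact ⟨δ, hδ, fun B hB => h (by simpa using hB)⟩
  have key : ∀ t : ℝ, 0 < t → t * C' < 1 → t * C' < δ →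
      ∫ x in Metric.ball (0:E) 1, (ContinuousLinearMap.id ℝ E + t • g' x).det ∂μ
        = μ.real (Metric.ball (0:E) 1) := by
    intro t ht ht1 htδ
    have htl : t < 1 := by nlinarith
    let F : E → E := fun x => x + t • g x
    have hF' : ∀ x ∈ Metric.ball (0:E) 1,
        HasFDerivWithinAt F (ContinuousLinearMap.id ℝ E + t • g' x) (Metric.ball 0 1) x := by
      intro x hx
      have hx' : ‖x‖ ≤ 1 := by simpa using (Metric.ball_subset_closedBall hx)
      exact ((hasFDerivAt_id x).add ((hg x hx').const_smul t)).hasFDerivWithinAt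
    have hinj : InjOn F (Metric.ball 0 1) := by
      intro x hx y hy hxy
      have h1 := hlip.dist_le_mul x (Metric.ball_subset_closedBall hx) y
        (Metric.ball_subset_closedBall hy)
      by_contra hne
      have hd : 0 < dist x y := dist_pos.2 hne
      have h2 : x - y = t • (g y - g x) := by
        have : x + t • g x = y + t • g y := hxy
        rw [smul_sub, sub_eq_sub_iff_add_eq_add, this, add_comm]
      have h3 : dist x y = t * dist (g x) (g y) := by
        rw [dist_eq_norm, h2, norm_smul, Real.norm_of_nonneg ht.le, dist_comm, dist_eq_norm]
      have : dist x y ≤ (t * C') * dist x y := by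
        calc dist x y = t * dist (g x) (g y) := h3
          _ ≤ t * (C' * dist x y) := by gcongr
          _ = _ := by ring
      nlinarith
    have himg : F '' (Metric.ball 0 1) = Metric.ball 0 1 := by
      apply Subset.antisymm
      · rintro _ ⟨x, hx, rfl⟩
        have hx' : ‖x‖ < 1 := by simpa using hx
        have h1 : F x = (1 - t) • x + t • r x := by
          simp only [F, g]; module
        have : ‖F x‖ < 1 := by
          rw [h1]
          calc _ ≤ ‖(1 - t) • x‖ + ‖t • r x‖ := norm_add_le _ _
            _ = (1 - t) * ‖x‖ + t * 1 := by
              rw [norm_smul, norm_smul, hn x hx'.le, Real.norm_of_nonneg ht.le,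
                Real.norm_of_nonneg (by linarith)]
            _ < 1 := by nlinarith
        simpa using this
      · intro y hy
        have hy' : ‖y‖ < 1 := by simpa using hy
        let t' : NNReal := ⟨t, ht.le⟩
        have hcon : ContractingWith (t' * C') (fun x => y - t • G x) := by
          refine ⟨?_, ?_⟩
          · exact (show t * (C':ℝ) < 1 from ht1)
          · apply LipschitzWith.of_dist_le_mul
            intro a b
            rw [dist_sub_left, dist_smul₀, Real.norm_of_nonneg ht.le]
            calc _ ≤ t * (C' * dist a b) := by gcongr; exact hGlip a b
              _ = (t * C') * dist a b := by ring
        have hfix : y - t • G (ContractingWith.fixedPoint _ hcon)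
          = ContractingWith.fixedPoint _ hcon := hcon.fixedPoint_isFixedPt
        set x := ContractingWith.fixedPoint _ hcon
        have hx : ‖x‖ < 1 := by
          by_contra hge
          rw [hGout x (not_lt.1 hge)] at hfix
          simp at hfix
          rw [← hfix] at hge
          exact hge hy'
        refine ⟨x, by simpa using hx, ?_⟩
        rw [hGin x hx.le] at hfix
        show x + t • g x = y
        exact (sub_eq_iff_eq_add.1 hfix).symm
    have hcv := lintegral_abs_det_fderiv_eq_addHaar_image μ
      (measurableSet_ball (x := (0:E)) (ε := 1)) hF' hinj
    rw [himg] at hcv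
    have hpos : ∀ x ∈ Metric.ball (0:E) 1, 0 < (ContinuousLinearMap.id ℝ E + t • g' x).det := by
      intro x hx
      apply hdet
      have hx' : ‖x‖ ≤ 1 := by simpa using (Metric.ball_subset_closedBall hx)
      rw [norm_smul, Real.norm_of_nonneg ht.le]
      have : ‖g' x‖ ≤ C' := hC' x hx'
      nlinarith
    rw [integral_eq_lintegral_of_nonneg_ae]
    · rw [Measure.real, ← hcv]
      congr 1
      apply setLIntegral_congr_fun measurableSet_ball
      intro x hx
      simp only [abs_of_pos (hpos x hx)]
    · filter_upwards [ae_restrict_mem measurableSet_ball] with x hx using (hpos x hx).le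
    · apply ContinuousOn.aestronglyMeasurable _ measurableSet_ball
      apply ContinuousLinearMap.continuous_det.comp_continuousOn
      exact continuousOn_const.add ((hg'c.mono Metric.ball_subset_closedBall).const_smul t)
  have hint : ∀ t : ℝ, IntegrableOn (fun x => (ContinuousLinearMap.id ℝ E + t • g' x).det)
      (Metric.ball (0:E) 1) μ := by
    intro t
    refine (ContinuousOn.integrableOn_compact (isCompact_closedBall (0:E) 1) ?_).mono_set
      Metric.ball_subset_closedBall
    apply ContinuousLinearMap.continuous_det.comp_continuousOn
    exact continuousOn_const.add (hg'c.const_smul t)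
  -- nodes
  obtain ⟨ε, hε, hε1⟩ : ∃ ε : ℝ, 0 < ε ∧ ε * C' < min 1 δ := by
    refine ⟨min 1 δ / (2 * C'), by positivity, ?_⟩
    have : 0 < min 1 δ := by positivity
    have h : min 1 δ / (2 * C') * C' = min 1 δ / 2 := by field_simp
    rw [h]; linarith
  let v : ℕ → ℝ := fun i => ε / (i + 1)
  have hv : Function.Injective v := by
    intro i j hij
    have h1 : ε / ((i:ℝ) + 1) = ε / (j + 1) := hij
    have h2 : (i:ℝ) + 1 = j + 1 := by
      field_simp at h1
      linarith
    exact_mod_cast add_right_cancel h2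
  have hvP : ∀ i, ∫ x in Metric.ball (0:E) 1, (ContinuousLinearMap.id ℝ E + v i • g' x).det ∂μ
        = μ.real (Metric.ball (0:E) 1) := by
    intro i
    have h0 : 0 < v i := by positivity
    have h1 : v i ≤ ε := div_le_self hε.le (by linarith [Nat.cast_nonneg (α := ℝ) i])
    have h2 : v i * C' < min 1 δ := lt_of_le_of_lt (by gcongr) hε1
    exact key _ h0 (h2.trans_le (min_le_left _ _)) (h2.trans_le (min_le_right _ _))
  obtain ⟨L, hL1, hL⟩ := brw_det_interp (E := E) v hv
  have hone : ∫ x in Metric.ball (0:E) 1, (ContinuousLinearMap.id ℝ E + g' x).det ∂μ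
        = μ.real (Metric.ball (0:E) 1) := by
    have hL' : (fun x => (ContinuousLinearMap.id ℝ E + g' x).det) = fun x =>
        ∑ i ∈ Finset.range (Module.finrank ℝ E + 1),
          L i * (ContinuousLinearMap.id ℝ E + v i • g' x).det := funext fun x => hL (g' x)
    rw [hL', integral_finsetSum _ (fun i _ => (hint (v i)).const_mul (L i))]
    simp_rw [integral_const_mul, hvP]
    rw [← Finset.sum_mul, hL1, one_mul]
  have hzero : ∫ x in Metric.ball (0:E) 1, (ContinuousLinearMap.id ℝ E + g' x).det ∂μ = 0 := by
    rw [setIntegral_eq_zero_of_forall_eq_zero]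
    intro x hx
    have hx' : ‖x‖ < 1 := by simpa using hx
    have h1 : ContinuousLinearMap.id ℝ E + g' x = fderiv ℝ r x := by simp [g']
    rw [h1]
    have hd := (hrd x hx'.le)
    have h2 : HasFDerivAt (fun y => inner ℝ (r y) (r y)) _ x := hd.inner ℝ hd
    have h3 : HasFDerivAt (fun y => inner ℝ (r y) (r y)) (0 : E →L[ℝ] ℝ) x := by
      apply (hasFDerivAt_const (1:ℝ) x).congr_of_eventuallyEq
      filter_upwards [Metric.isOpen_ball.mem_nhds hx] with y hy
      have hy' : ‖y‖ < 1 := by simpa using hy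
      rw [real_inner_self_eq_norm_sq, hn y hy'.le]; norm_num
    have h4 := h2.unique h3
    have h5 : ∀ w, inner ℝ (r x) (fderiv ℝ r x w) = 0 := by
      intro w
      have := congrArg (fun l : E →L[ℝ] ℝ => l w) h4
      simp [fderivInnerCLM_apply] at this
      rw [real_inner_comm (r x)] at this
      linarith
    by_contra hne
    have hu : IsUnit (LinearMap.det (fderiv ℝ r x : E →ₗ[ℝ] E)) := isUnit_iff_ne_zero.2 hne
    have hsurj : Function.Surjective (fderiv ℝ r x : E →ₗ[ℝ] E) :=
      ((Module.End.isUnit_iff _).1 ((LinearMap.isUnit_iff_isUnit_det _).2 hu)).2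
    obtain ⟨w, hw⟩ := hsurj (r x)
    have h6 := h5 w
    have hw' : fderiv ℝ r x w = r x := hw
    rw [hw', real_inner_self_eq_norm_sq, hn x hx'.le] at h6
    norm_num at h6
  have hposv : 0 < μ.real (Metric.ball (0:E) 1) :=
    ENNReal.toReal_pos (Metric.measure_ball_pos μ 0 one_pos).ne' measure_ball_lt_top.ne
  rw [hzero] at hone
  exact hposv.ne hone

/-- Brouwer for `C¹` self-maps of the closed unit ball. -/
lemma brw_smooth {E : Type*} [NormedAddCommGroup E] [InnerProductSpace ℝ E]
    [FiniteDimensional ℝ E] (p : E → E) (hp : ContDiff ℝ 1 p)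
    (hb : ∀ x : E, ‖x‖ ≤ 1 → ‖p x‖ ≤ 1) : ∃ x : E, ‖x‖ ≤ 1 ∧ p x = x := by
  by_contra hno
  push Not at hno
  let d : E → E := fun x => x - p x
  let D : E → ℝ := fun x => (inner ℝ x (d x)) ^ 2 + ‖d x‖ ^ 2 * (1 - ‖x‖ ^ 2)
  let lam : E → ℝ := fun x => (-(inner ℝ x (d x)) + √(D x)) / ‖d x‖ ^ 2
  have hd0 : ∀ x, ‖x‖ ≤ 1 → 0 < ‖d x‖ ^ 2 := fun x hx => by
    have : d x ≠ 0 := sub_ne_zero.2 (hno x hx).symm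
    positivity
  have hin : ∀ x, ‖x‖ = 1 → 0 < inner ℝ x (d x) := fun x hx => by
    have h1 : inner ℝ x (d x) = 1 - inner ℝ x (p x) := by
      simp only [d]; rw [inner_sub_right, real_inner_self_eq_norm_sq, hx]; norm_num
    have h2 : ‖d x‖ ^ 2 = ‖x‖ ^ 2 - 2 * inner ℝ x (p x) + ‖p x‖ ^ 2 := norm_sub_sq_real x (p x)
    have h3 := hd0 x hx.le
    have h4 := hb x hx.le
    have h5 : ‖p x‖ ^ 2 ≤ 1 := by nlinarith [norm_nonneg (p x)]
    rw [hx] at h2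
    rw [h1]; nlinarith
  have hD : ∀ x, ‖x‖ ≤ 1 → 0 < D x := fun x hx => by
    rcases hx.lt_or_eq with h | h
    · have h1 := hd0 x hx
      have h2 : 0 < 1 - ‖x‖ ^ 2 := by nlinarith [norm_nonneg x]
      have : 0 < ‖d x‖ ^ 2 * (1 - ‖x‖ ^ 2) := mul_pos h1 h2
      have := sq_nonneg (inner ℝ x (d x))
      simp only [D]; linarith
    · have := hin x h
      simp only [D, h]
      have h2 : 0 < (inner ℝ x (d x)) ^ 2 := by positivity
      linarith
  have hdc : ContDiff ℝ 1 d := contDiff_id.sub hp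
  have hic : ContDiff ℝ 1 fun x => (inner ℝ x (d x) : ℝ) := contDiff_id.inner ℝ hdc
  have hnc : ContDiff ℝ 1 fun x => ‖d x‖ ^ 2 := hdc.norm_sq ℝ
  have hDc : ContDiff ℝ 1 D :=
    (hic.pow 2).add (hnc.mul (contDiff_const.sub (contDiff_id.norm_sq ℝ)))
  refine brw_no_retraction (fun x => x + lam x • d x) ?_ ?_ ?_
  · intro x hx
    have h1 : ContDiffAt ℝ 1 lam x :=
      (hic.contDiffAt.neg.add (hDc.contDiffAt.sqrt (hD x hx).ne')).div hnc.contDiffAt (hd0 x hx).ne'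
    exact contDiffAt_id.add (h1.smul hdc.contDiffAt)
  · intro x hx
    have h0 := hd0 x hx
    have hsq : √(D x) ^ 2 = D x := Real.sq_sqrt (hD x hx).le
    have h1 : ‖x + lam x • d x‖ ^ 2
        = ‖x‖ ^ 2 + 2 * (lam x * inner ℝ x (d x)) + lam x ^ 2 * ‖d x‖ ^ 2 := by
      rw [norm_add_sq_real, inner_smul_right, norm_smul, mul_pow]; simp
    have h3 : lam x * ‖d x‖ ^ 2 = -(inner ℝ x (d x)) + √(D x) := by
      exact div_mul_cancel₀ _ h0.ne'
    have h2 : ‖x + lam x • d x‖ ^ 2 = 1 := by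
      rw [h1]
      have h4 : ‖d x‖ ^ 2 * (‖x‖ ^ 2 + 2 * (lam x * inner ℝ x (d x)) + lam x ^ 2 * ‖d x‖ ^ 2)
          = ‖d x‖ ^ 2 * 1 := by
        have : ‖d x‖ ^ 2 * (‖x‖ ^ 2 + 2 * (lam x * inner ℝ x (d x)) + lam x ^ 2 * ‖d x‖ ^ 2)
          = ‖d x‖ ^ 2 * ‖x‖ ^ 2 + 2 * (lam x * ‖d x‖ ^ 2) * inner ℝ x (d x)
            + (lam x * ‖d x‖ ^ 2) ^ 2 := by ring
        rw [this, h3]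
        have hDx : D x = (inner ℝ x (d x)) ^ 2 + ‖d x‖ ^ 2 * (1 - ‖x‖ ^ 2) := rfl
        linear_combination hsq + hDx
      exact mul_left_cancel₀ h0.ne' h4
    have := norm_nonneg (x + lam x • d x)
    nlinarith
  · intro x hx
    have h1 : √(D x) = inner ℝ x (d x) := by
      have : D x = (inner ℝ x (d x)) ^ 2 := by simp [D, hx]
      rw [this, Real.sqrt_sq (hin x hx).le]
    simp [lam, h1]

/-- Brouwer for the closed unit ball (map defined on the whole space). -/
lemma brw_ball {E : Type*} [NormedAddCommGroup E] [InnerProductSpace ℝ E]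
    [FiniteDimensional ℝ E] (f : E → E) (hf : Continuous f)
    (hb : ∀ x : E, ‖f x‖ ≤ 1) : ∃ x : E, f x = x := by
  by_contra hno
  push Not at hno
  have hc : Continuous fun x => ‖f x - x‖ := (hf.sub continuous_id).norm
  obtain ⟨x0, -, hx0⟩ := (isCompact_closedBall (0:E) 1).exists_isMinOn ⟨0, by simp⟩ hc.continuousOn
  have hpos : 0 < ‖f x0 - x0‖ := norm_pos_iff.2 (sub_ne_zero.2 (hno x0))
  set ε := ‖f x0 - x0‖ / 4 with hε
  have hε0 : 0 < ε := by positivity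
  obtain ⟨g, hg, hgf, -⟩ := hf.exists_contDiff_approx 1 (ε := fun _ => ε) continuous_const
    (fun _ => hε0)
  have hgn : ∀ x, ‖g x‖ < 1 + ε := fun x => by
    have h1 := hgf x
    rw [dist_eq_norm] at h1
    have h2 := norm_le_norm_add_norm_sub (f x) (g x)
    have := hb x
    rw [norm_sub_rev] at h2
    linarith
  obtain ⟨x, hx, hfx⟩ := brw_smooth (fun x => (1 + ε)⁻¹ • g x) (contDiff_const.smul hg) (by
    intro x _
    rw [norm_smul, norm_inv, Real.norm_of_nonneg (by linarith)]
    rw [inv_mul_le_iff₀ (by linarith)]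
    linarith [hgn x])
  have hgx : g x = (1 + ε) • x := by
    have : (1 + ε) • ((1 + ε)⁻¹ • g x) = (1 + ε) • x := by rw [hfx]
    rwa [smul_inv_smul₀ (by positivity)] at this
  have h1 : ‖f x - x‖ ≤ 2 * ε := by
    have h2 : f x - x = -(g x - f x) + ε • x := by rw [hgx]; module
    rw [h2]
    refine (norm_add_le _ _).trans ?_
    rw [norm_neg, norm_smul, Real.norm_of_nonneg hε0.le]
    have := hgf x
    rw [dist_eq_norm] at this
    nlinarith
  have h2 : ‖f x0 - x0‖ ≤ ‖f x - x‖ := hx0 (by simpa using hx)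
  linarith

/-- Brouwer for bounded continuous self-maps of the whole space. -/
lemma brw_bdd {E : Type*} [NormedAddCommGroup E] [InnerProductSpace ℝ E]
    [FiniteDimensional ℝ E] (f : E → E) (hf : Continuous f) (R : ℝ)
    (hb : ∀ x : E, ‖f x‖ ≤ R) : ∃ x : E, f x = x := by
  set S := max R 1
  have hS : 0 < S := by positivity
  obtain ⟨x, hx⟩ := brw_ball (fun x => S⁻¹ • f (S • x)) (by fun_prop) (by
    intro x
    rw [norm_smul, norm_inv, Real.norm_of_nonneg hS.le, inv_mul_le_iff₀ hS, mul_one]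
    exact (hb _).trans (le_max_left _ _))
  refine ⟨S • x, ?_⟩
  conv_rhs => rw [← hx]
  rw [smul_inv_smul₀ hS.ne']

/-- Brouwer for the standard simplex. -/
lemma brw_simplex {ι : Type*} [Fintype ι] [Nonempty ι] (f : (ι → ℝ) → (ι → ℝ))
    (hf : ContinuousOn f (stdSimplex ℝ ι)) (hm : MapsTo f (stdSimplex ℝ ι) (stdSimplex ℝ ι)) :
    ∃ x ∈ stdSimplex ℝ ι, f x = x := by
  classical
  obtain ⟨i0⟩ := ‹Nonempty ι›
  -- explicit retraction onto the simplex
  let q : (ι → ℝ) → (ι → ℝ) := fun x i =>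
    max (x i) 0 + if i = i0 then max (1 - ∑ j, max (x j) 0) 0 else 0
  let Sg : (ι → ℝ) → ℝ := fun x => max 1 (∑ j, max (x j) 0)
  have hSg : ∀ x, 0 < Sg x := fun x => lt_of_lt_of_le one_pos (le_max_left _ _)
  let P : (ι → ℝ) → (ι → ℝ) := fun x i => q x i / Sg x
  have hPc : Continuous P := by
    apply continuous_pi
    intro i
    apply Continuous.div _ _ (fun x => (hSg x).ne')
    · simp only [q]
      split_ifs <;> fun_prop
    · simp only [Sg]; fun_prop
  have hPm : ∀ x, P x ∈ stdSimplex ℝ ι := by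
    intro x
    refine ⟨fun i => ?_, ?_⟩
    · apply div_nonneg _ (hSg x).le
      simp only [q]; split_ifs <;> positivity
    · simp only [P]
      rw [← Finset.sum_div, div_eq_one_iff_eq (hSg x).ne']
      simp only [q, Sg, Finset.sum_add_distrib, Finset.sum_ite_eq', Finset.mem_univ, if_true]
      rcases le_total (∑ j, max (x j) 0) 1 with h | h
      · rw [max_eq_left h, max_eq_left (by linarith)]; ring
      · rw [max_eq_right h, max_eq_right (by linarith)]; ring
  have hPid : ∀ x ∈ stdSimplex ℝ ι, P x = x := by
    intro x hx
    have h1 : ∀ j, max (x j) 0 = x j := fun j => max_eq_left (hx.1 j)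
    ext i
    simp only [P, q, Sg, h1, hx.2]
    simp
  let F : EuclideanSpace ℝ ι → EuclideanSpace ℝ ι := fun y => WithLp.toLp 2 (f (P (WithLp.ofLp y)))
  have hFc : Continuous F := by
    have h1 : Continuous fun y : EuclideanSpace ℝ ι => f (P (WithLp.ofLp y)) :=
      hf.comp_continuous (hPc.comp (PiLp.continuous_ofLp 2 _)) (fun y => hPm _)
    exact (PiLp.continuous_toLp 2 _).comp h1
  obtain ⟨R, hR⟩ : ∃ R : ℝ, ∀ y, ‖F y‖ ≤ R := by
    have hK : IsCompact ((WithLp.toLp 2 : (ι → ℝ) → EuclideanSpace ℝ ι) '' (stdSimplex ℝ ι)) :=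
      (isCompact_stdSimplex ℝ ι).image (PiLp.continuous_toLp 2 _)
    obtain ⟨R, hR⟩ := hK.isBounded.exists_norm_le
    exact ⟨R, fun y => hR _ ⟨_, hm (hPm _), rfl⟩⟩
  obtain ⟨y, hy⟩ := brw_bdd F hFc R hR
  have hy' : f (P (WithLp.ofLp y)) = WithLp.ofLp y := congrArg WithLp.ofLp hy
  have hmem : WithLp.ofLp y ∈ stdSimplex ℝ ι := by
    rw [← hy']; exact hm (hPm _)
  refine ⟨WithLp.ofLp y, hmem, ?_⟩
  rwa [hPid _ hmem] at hy'

/-- Schauder fixed point theorem. -/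
lemma schauder_fp {X : Type*} [NormedAddCommGroup X] [NormedSpace ℝ X] (C Q : Set X)
    (hCc : Convex ℝ C) (hCcl : IsClosed C) (hne : C.Nonempty) (hQ : IsCompact Q)
    (S : X → X) (hS : ContinuousOn S C) (hSC : MapsTo S C C) (hSQ : MapsTo S C Q) :
    ∃ x ∈ C, S x = x := by
  classical
  have approx : ∀ ε : ℝ, 0 < ε → ∃ x ∈ C, dist (S x) x ≤ ε := by
    intro ε hε
    have htb : TotallyBounded (S '' C) := hQ.totallyBounded.subset (by
      rintro _ ⟨x, hx, rfl⟩; exact hSQ hx)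
    obtain ⟨t, htS, htf, hcov⟩ := Metric.finite_approx_of_totallyBounded htb ε hε
    have htC : ∀ z ∈ t, z ∈ C := fun z hz => by
      obtain ⟨x, hx, rfl⟩ := htS hz; exact hSC hx
    have _ : Fintype t := htf.fintype
    have hcov' : ∀ x ∈ C, ∃ z : t, dist (S x) z < ε := by
      intro x hx
      have := hcov ⟨x, hx, rfl⟩
      simp only [mem_iUnion, Metric.mem_ball, exists_prop] at this
      obtain ⟨z, hz, h⟩ := this
      exact ⟨⟨z, hz⟩, h⟩
    have _ : Nonempty t := by
      obtain ⟨x, hx⟩ := hne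
      obtain ⟨z, -⟩ := hcov' x hx
      exact ⟨z⟩
    let comb : (t → ℝ) → X := fun y => ∑ i, y i • (i : X)
    have hcomb : ∀ y ∈ stdSimplex ℝ t, comb y ∈ C := fun y hy =>
      hCc.sum_mem (fun i _ => hy.1 i) hy.2 (fun i _ => htC i i.2)
    have hcombc : Continuous comb := by fun_prop
    let φ : t → X → ℝ := fun i x => max (ε - dist x i) 0
    have hφc : ∀ i, Continuous (φ i) := fun i => by fun_prop
    have hφ0 : ∀ i x, 0 ≤ φ i x := fun i x => le_max_right _ _
    have hφs : ∀ x ∈ C, 0 < ∑ i, φ i (S x) := by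
      intro x hx
      obtain ⟨z, hz⟩ := hcov' x hx
      exact Finset.sum_pos' (fun i _ => hφ0 i _) ⟨z, Finset.mem_univ _,
        lt_max_of_lt_left (by linarith)⟩
    let f : (t → ℝ) → (t → ℝ) := fun y i => φ i (S (comb y)) / ∑ j, φ j (S (comb y))
    have hScomb : ContinuousOn (fun y => S (comb y)) (stdSimplex ℝ t) :=
      hS.comp hcombc.continuousOn hcomb
    obtain ⟨y, hy, hfy⟩ := brw_simplex f (by
      apply continuousOn_pi.2
      intro i
      apply ContinuousOn.div
      · exact (hφc i).comp_continuousOn hScomb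
      · exact continuousOn_finsetSum _ fun j _ => (hφc j).comp_continuousOn hScomb
      · exact fun y hy => (hφs _ (hcomb y hy)).ne') (by
      intro y hy
      refine ⟨fun i => div_nonneg (hφ0 _ _) (hφs _ (hcomb y hy)).le, ?_⟩
      simp only [f]
      rw [← Finset.sum_div, div_self (hφs _ (hcomb y hy)).ne'])
    refine ⟨comb y, hcomb y hy, ?_⟩
    have h1 : S (comb y) - comb y = ∑ i, y i • (S (comb y) - (i : X)) := by
      simp only [smul_sub, Finset.sum_sub_distrib, ← Finset.sum_smul, hy.2, one_smul, comb]
    rw [dist_eq_norm, h1]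
    calc _ ≤ ∑ i, ‖y i • (S (comb y) - (i : X))‖ := norm_sum_le _ _
      _ ≤ ∑ i, y i * ε := by
        apply Finset.sum_le_sum
        intro i _
        rw [norm_smul, Real.norm_of_nonneg (hy.1 i), ← dist_eq_norm]
        by_cases h : dist (S (comb y)) i ≤ ε
        · exact mul_le_mul_of_nonneg_left h (hy.1 i)
        · have h0 : y i = 0 := by
            rw [← hfy]
            simp only [f, φ]
            rw [max_eq_right (by linarith), zero_div]
          rw [h0]; simp
      _ = ε := by rw [← Finset.sum_mul, hy.2, one_mul]
  choose! x hxC hx using approx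
  let u : ℕ → X := fun n => x (1 / ((n:ℝ) + 1))
  have hpos : ∀ n : ℕ, (0:ℝ) < 1 / ((n:ℝ) + 1) := fun n => by positivity
  have huC : ∀ n, u n ∈ C := fun n => hxC _ (hpos n)
  obtain ⟨z, -, φ, hφ, hz⟩ := hQ.tendsto_subseq (fun n => hSQ (huC n))
  have hd : Filter.Tendsto (fun n => dist (S (u n)) (u n)) Filter.atTop (nhds 0) :=
    squeeze_zero (fun _ => dist_nonneg) (fun n => hx _ (hpos n))
      tendsto_one_div_add_atTop_nhds_zero_nat
  have hu : Filter.Tendsto (u ∘ φ) Filter.atTop (nhds z) := by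
    rw [tendsto_iff_dist_tendsto_zero] at hz ⊢
    refine squeeze_zero (fun _ => dist_nonneg) (fun n => ?_)
      (by simpa using (hd.comp hφ.tendsto_atTop).add hz)
    exact dist_triangle_left _ _ _
  have hzC : z ∈ C := hCcl.mem_of_tendsto hu (Filter.Eventually.of_forall fun n => huC _)
  refine ⟨z, hzC, ?_⟩
  have h1 : Filter.Tendsto (fun n => S ((u ∘ φ) n)) Filter.atTop (nhds (S z)) :=
    (hS z hzC).tendsto.comp (tendsto_nhdsWithin_iff.2
      ⟨hu, Filter.Eventually.of_forall fun n => huC _⟩)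
  exact tendsto_nhds_unique h1 hz

/-- Integration over `[0,1]` as a functional on `C[0,1]`. -/
noncomputable def hamJ (h : C(Set.Icc (0:ℝ) 1, ℝ)) : ℝ :=
  ∫ s in (0:ℝ)..1, h (Set.projIcc 0 1 zero_le_one s)

lemma hamJ_sub_le (h h' : C(Set.Icc (0:ℝ) 1, ℝ)) : |hamJ h - hamJ h'| ≤ ‖h - h'‖ := by
  have hc : ∀ h : C(Set.Icc (0:ℝ) 1, ℝ), Continuous fun s : ℝ =>
    h (Set.projIcc 0 1 zero_le_one s) := fun h => h.continuous.comp continuous_projIcc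
  unfold hamJ
  rw [← intervalIntegral.integral_sub ((hc h).intervalIntegrable _ _)
    ((hc h').intervalIntegrable _ _)]
  have := intervalIntegral.norm_integral_le_of_norm_le_const (a := 0) (b := 1) (C := ‖h - h'‖)
    (f := fun s : ℝ => h (Set.projIcc 0 1 zero_le_one s) - h' (Set.projIcc 0 1 zero_le_one s))
    (fun s _ => (h - h').norm_coe_le_norm _)
  simpa using this

lemma hamJ_continuous : Continuous hamJ := by
  apply LipschitzWith.continuous (K := 1)
  apply LipschitzWith.of_dist_le_mul
  intro h h'
  rw [Real.dist_eq, dist_eq_norm]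
  simpa using hamJ_sub_le h h'

/-- The linear integral operator with kernel `K`. -/
noncomputable def hamL (K : C(Set.Icc (0:ℝ) 1, C(Set.Icc (0:ℝ) 1, ℝ)))
    (g : C(Set.Icc (0:ℝ) 1, ℝ)) : C(Set.Icc (0:ℝ) 1, ℝ) :=
  ⟨fun t => hamJ (K t * g), hamJ_continuous.comp (by fun_prop)⟩

lemma hamL_continuous (K : C(Set.Icc (0:ℝ) 1, C(Set.Icc (0:ℝ) 1, ℝ))) :
    Continuous (hamL K) := by
  apply ContinuousMap.continuous_of_continuous_uncurry
  have : Continuous fun p : C(Set.Icc (0:ℝ) 1, ℝ) × Set.Icc (0:ℝ) 1 => K p.2 * p.1 := by fun_prop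
  exact hamJ_continuous.comp this

lemma hamL_compact (K : C(Set.Icc (0:ℝ) 1, C(Set.Icc (0:ℝ) 1, ℝ))) (R : ℝ) :
    ∃ Q : Set C(Set.Icc (0:ℝ) 1, ℝ), IsCompact Q ∧ ∀ g, ‖g‖ ≤ R → hamL K g ∈ Q := by
  let A : Set (BoundedContinuousFunction (Set.Icc (0:ℝ) 1) ℝ) :=
    (fun g => BoundedContinuousFunction.mkOfCompact (hamL K g)) '' {g | ‖g‖ ≤ R}
  have hA : IsCompact (closure A) := by
    apply BoundedContinuousFunction.arzela_ascoli (Metric.closedBall 0 (‖K‖ * R))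
      (isCompact_closedBall _ _)
    · rintro _ t ⟨g, hg, rfl⟩
      have h0 : hamJ 0 = 0 := by simp [hamJ]
      have h1 : |hamJ (K t * g)| ≤ ‖K t * g‖ := by
        simpa [h0] using hamJ_sub_le (K t * g) 0
      have h2 : ‖K t * g‖ ≤ ‖K‖ * R :=
        (norm_mul_le _ _).trans (mul_le_mul (K.norm_coe_le_norm t) hg (norm_nonneg _)
          ((norm_nonneg (K t)).trans (K.norm_coe_le_norm t)))
      simpa [hamL] using h1.trans h2
    · intro t0
      rw [Metric.equicontinuousAt_iff]
      intro ε hε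
      have hKc : ContinuousAt K t0 := K.continuous.continuousAt
      obtain ⟨δ, hδ, h⟩ := Metric.continuousAt_iff.1 hKc (ε / (|R| + 1)) (by positivity)
      refine ⟨δ, hδ, ?_⟩
      rintro t ht ⟨_, g, hg, rfl⟩
      have h1 : |hamJ (K t0 * g) - hamJ (K t * g)| ≤ ‖K t0 * g - K t * g‖ := hamJ_sub_le _ _
      have h2 : ‖K t0 * g - K t * g‖ ≤ dist (K t) (K t0) * ‖g‖ := by
        rw [← sub_mul, dist_comm, dist_eq_norm]; exact norm_mul_le _ _
      have h3 := h ht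
      have h4 : ‖g‖ ≤ |R| := le_trans hg (le_abs_self R)
      have h5 : dist (K t) (K t0) * ‖g‖ ≤ dist (K t) (K t0) * |R| := by gcongr
      have h6 : dist (K t) (K t0) * (|R| + 1) < ε := by
        rwa [lt_div_iff₀ (by positivity)] at h3
      have h7 := dist_nonneg (x := K t) (y := K t0)
      show dist (hamJ (K t0 * g)) (hamJ (K t * g)) < ε
      rw [Real.dist_eq]
      nlinarith
  refine ⟨(ContinuousMap.isometryEquivBoundedOfCompact (Set.Icc (0:ℝ) 1) ℝ).symm '' closure A,
    hA.image (IsometryEquiv.continuous _), fun g hg => ?_⟩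
  exact ⟨_, subset_closure ⟨g, hg, rfl⟩, by ext t; rfl⟩

/-- One component of the system: properties of the integral operator. -/
lemma ham_comp (k : ℝ → ℝ → ℝ) (Φ : ℝ → ℝ) (a b c : ℝ)
    (hk : ContinuousOn (fun p : ℝ × ℝ => k p.1 p.2) (Set.Icc 0 1 ×ˢ Set.Icc 0 1))
    (ha : 0 ≤ a) (hab : a ≤ b) (hb : b ≤ 1) (hc : c ∈ Set.Ioc (0:ℝ) 1)
    (hΦmeas : Measurable Φ) (hΦnn : ∀ s ∈ Set.Icc (0:ℝ) 1, 0 ≤ Φ s)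
    (hΦbdd : ∃ C : ℝ, ∀ᵐ s ∂(volume.restrict (Set.Icc (0:ℝ) 1)), |Φ s| ≤ C)
    (hub : ∀ t ∈ Set.Icc (0:ℝ) 1, ∀ᵐ s ∂(volume.restrict (Set.Icc (0:ℝ) 1)), |k t s| ≤ Φ s)
    (hlb : ∀ t ∈ Set.Icc a b, ∀ᵐ s ∂(volume.restrict (Set.Icc (0:ℝ) 1)), c * Φ s ≤ k t s)
    (m M : ℝ) (hmpos : 0 < m)
    (hm : 1 / m = ⨆ t : Set.Icc (0:ℝ) 1, ∫ s in (0:ℝ)..1, |k t.1 s|)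
    (hMpos : 0 < M) (hinfpos : 0 < ⨅ t : Set.Icc a b, ∫ s in a..b, k t.1 s)
    (hM : 1 / M = ⨅ t : Set.Icc a b, ∫ s in a..b, k t.1 s) :
    ∃ L : C(Set.Icc (0:ℝ) 1, ℝ) → C(Set.Icc (0:ℝ) 1, ℝ), Continuous L ∧
      (∀ g (t : Set.Icc (0:ℝ) 1), L g t =
        ∫ s in (0:ℝ)..1, k t s * g (Set.projIcc 0 1 zero_le_one s)) ∧
      (∀ R : ℝ, ∃ Q : Set C(Set.Icc (0:ℝ) 1, ℝ), IsCompact Q ∧ ∀ g, ‖g‖ ≤ R → L g ∈ Q) ∧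
      (∀ g, (∀ s, 0 ≤ g s) → ∀ t : Set.Icc (0:ℝ) 1, t.1 ∈ Set.Icc a b → c * ‖L g‖ ≤ L g t) ∧
      (∀ g, (∀ s, 0 ≤ g s) → ∀ r : ℝ, 0 < r → (∀ s, g s ≤ m * r) → ‖L g‖ ≤ r) ∧
      (∀ g, (∀ s, 0 ≤ g s) → ∀ ρ : ℝ, 0 < ρ →
        (∀ s : Set.Icc (0:ℝ) 1, s.1 ∈ Set.Icc a b → M * ρ < g s) →
        ∀ t : Set.Icc (0:ℝ) 1, t.1 ∈ Set.Icc a b → ρ < L g t) := by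
  let K0 : C(Set.Icc (0:ℝ) 1 × Set.Icc (0:ℝ) 1, ℝ) := ⟨fun p => k p.1 p.2, by
    have : Continuous fun p : Set.Icc (0:ℝ) 1 × Set.Icc (0:ℝ) 1 => ((p.1 : ℝ), (p.2 : ℝ)) := by
      fun_prop
    exact hk.comp_continuous this (fun p => ⟨p.1.2, p.2.2⟩)⟩
  let K := K0.curry
  have hLdef : ∀ g (t : Set.Icc (0:ℝ) 1), hamL K g t =
        ∫ s in (0:ℝ)..1, k t s * g (Set.projIcc 0 1 zero_le_one s) := by
    intro g t
    show ∫ s in (0:ℝ)..1, k t (Set.projIcc 0 1 zero_le_one s) *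
      g (Set.projIcc 0 1 zero_le_one s) = _
    apply intervalIntegral.integral_congr
    intro s hs
    rw [uIcc_of_le zero_le_one] at hs
    simp only [Set.projIcc_of_mem zero_le_one hs]
  have hGc : ∀ g : C(Set.Icc (0:ℝ) 1, ℝ), Continuous fun s : ℝ =>
    g (Set.projIcc 0 1 zero_le_one s) := fun g => g.continuous.comp continuous_projIcc
  have hkc : ∀ t : Set.Icc (0:ℝ) 1, ContinuousOn (k t) (Set.Icc 0 1) := fun t =>
    hk.comp (f := fun s : ℝ => ((t : ℝ), s)) (by fun_prop) (fun s hs => ⟨t.2, hs⟩)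
  have hint : ∀ (t : Set.Icc (0:ℝ) 1) (g : C(Set.Icc (0:ℝ) 1, ℝ)), IntervalIntegrable
      (fun s => k t s * g (Set.projIcc 0 1 zero_le_one s)) volume 0 1 := fun t g => by
    apply ContinuousOn.intervalIntegrable_of_Icc zero_le_one
    exact (hkc t).mul (hGc g).continuousOn
  have hΦint : ∀ g : C(Set.Icc (0:ℝ) 1, ℝ), IntervalIntegrable
      (fun s => Φ s * g (Set.projIcc 0 1 zero_le_one s)) volume 0 1 := fun g => by
    obtain ⟨C, hC⟩ := hΦbdd
    rw [intervalIntegrable_iff_integrableOn_Icc_of_le zero_le_one]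
    apply Measure.integrableOn_of_bounded (M := C * ‖g‖) (by simp)
    · exact (hΦmeas.mul (hGc g).measurable).aestronglyMeasurable
    · filter_upwards [hC] with s hs
      rw [norm_mul]
      exact mul_le_mul hs (g.norm_coe_le_norm _) (norm_nonneg _) ((abs_nonneg _).trans hs)
  have habs : ∀ (t : Set.Icc (0:ℝ) 1) (g : C(Set.Icc (0:ℝ) 1, ℝ)), (∀ s, 0 ≤ g s) →
      |hamL K g t| ≤ ∫ s in (0:ℝ)..1, |k t s| * g (Set.projIcc 0 1 zero_le_one s) := by
    intro t g hg
    rw [hLdef]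
    refine (intervalIntegral.abs_integral_le_integral_abs zero_le_one).trans (le_of_eq ?_)
    simp only [abs_mul, abs_of_nonneg (hg _)]
  have hint' : ∀ (t : Set.Icc (0:ℝ) 1) (g : C(Set.Icc (0:ℝ) 1, ℝ)), IntervalIntegrable
      (fun s => |k t s| * g (Set.projIcc 0 1 zero_le_one s)) volume 0 1 := fun t g => by
    apply ContinuousOn.intervalIntegrable_of_Icc zero_le_one
    exact (hkc t).abs.mul (hGc g).continuousOn
  have hsub : Set.Icc a b ⊆ Set.Icc 0 1 := Set.Icc_subset_Icc ha hb
  refine ⟨hamL K, hamL_continuous K, hLdef, hamL_compact K, ?_, ?_, ?_⟩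
  · intro g hg t ht
    set B := ∫ s in (0:ℝ)..1, Φ s * g (Set.projIcc 0 1 zero_le_one s) with hB
    have h1 : ∀ t' : Set.Icc (0:ℝ) 1, |hamL K g t'| ≤ B := fun t' => by
      refine (habs t' g hg).trans ?_
      apply intervalIntegral.integral_mono_ae_restrict zero_le_one (hint' t' g) (hΦint g)
      filter_upwards [hub t' t'.2] with s hs
      exact mul_le_mul_of_nonneg_right hs (hg _)
    have hB0 : 0 ≤ B := (abs_nonneg _).trans (h1 t)
    have h2 : ‖hamL K g‖ ≤ B := (ContinuousMap.norm_le _ hB0).2 h1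
    have h3 : c * B ≤ hamL K g t := by
      rw [hLdef, hB, ← intervalIntegral.integral_const_mul]
      apply intervalIntegral.integral_mono_ae_restrict zero_le_one ((hΦint g).const_mul c)
        (hint t g)
      filter_upwards [hlb t ht] with s hs
      rw [← mul_assoc]
      exact mul_le_mul_of_nonneg_right hs (hg _)
    exact (mul_le_mul_of_nonneg_left h2 hc.1.le).trans h3
  · intro g hg r hr hgr
    refine (ContinuousMap.norm_le _ hr.le).2 fun t => ?_
    have hbdd : BddAbove (range fun t : Set.Icc (0:ℝ) 1 => ∫ s in (0:ℝ)..1, |k t.1 s|) := by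
      by_contra h
      rw [Real.iSup_of_not_bddAbove h] at hm
      have : 0 < 1 / m := by positivity
      linarith
    have h1 : ∫ s in (0:ℝ)..1, |k t s| ≤ 1 / m := by
      rw [hm]; exact le_ciSup hbdd t
    refine (habs t g hg).trans ?_
    calc _ ≤ ∫ s in (0:ℝ)..1, |k t s| * (m * r) := by
          apply intervalIntegral.integral_mono_on zero_le_one (hint' t g)
          · exact ((hkc t).abs.intervalIntegrable_of_Icc zero_le_one).mul_const _
          · exact fun s _ => mul_le_mul_of_nonneg_left (hgr _) (abs_nonneg _)
      _ = (∫ s in (0:ℝ)..1, |k t s|) * (m * r) := intervalIntegral.integral_mul_const _ _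
      _ ≤ 1 / m * (m * r) := by gcongr
      _ = r := by field_simp
  · intro g hg ρ hρ hgρ t ht
    have hbdd : BddBelow (range fun t : Set.Icc a b => ∫ s in a..b, k t.1 s) := by
      by_contra h
      rw [Real.iInf_of_not_bddBelow h] at hinfpos
      exact lt_irrefl _ hinfpos
    have h1 : 1 / M ≤ ∫ s in a..b, k t s := by
      rw [hM]; exact ciInf_le hbdd (⟨t.1, ht⟩ : Set.Icc a b)
    have hk0 : ∀ᵐ s ∂(volume.restrict (Set.Icc (0:ℝ) 1)), 0 ≤ k t s := by
      filter_upwards [hlb t ht, ae_restrict_mem measurableSet_Icc] with s hs hs'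
      exact (mul_nonneg hc.1.le (hΦnn s hs')).trans hs
    obtain ⟨s0, hs0, hmin⟩ := (isCompact_Icc (a := a) (b := b)).exists_isMinOn
      ⟨a, left_mem_Icc.2 hab⟩ (hGc g).continuousOn
    set μ := g (Set.projIcc 0 1 zero_le_one s0) with hμ
    have hμρ : M * ρ < μ := by
      rw [hμ, Set.projIcc_of_mem zero_le_one (hsub hs0)]
      exact hgρ _ hs0
    have hsubset : Ioc (0:ℝ) 1 ⊆ Icc 0 1 := Ioc_subset_Icc_self
    rw [hLdef]
    have h2 : ∫ s in a..b, k t s * g (Set.projIcc 0 1 zero_le_one s)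
        ≤ ∫ s in (0:ℝ)..1, k t s * g (Set.projIcc 0 1 zero_le_one s) := by
      apply intervalIntegral.integral_mono_interval ha hab hb _ (hint t g)
      filter_upwards [ae_restrict_of_ae_restrict_of_subset hsubset hk0] with s hs
      exact mul_nonneg hs (hg _)
    have h3 : ∫ s in a..b, k t s * μ ≤ ∫ s in a..b, k t s * g (Set.projIcc 0 1 zero_le_one s) := by
      apply intervalIntegral.integral_mono_ae_restrict hab
      · exact (((hkc t).mono hsub).intervalIntegrable_of_Icc hab).mul_const _
      · apply ContinuousOn.intervalIntegrable_of_Icc hab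
        exact ((hkc t).mono hsub).mul (hGc g).continuousOn
      · filter_upwards [ae_restrict_of_ae_restrict_of_subset hsub hk0,
          ae_restrict_mem measurableSet_Icc] with s hs hs'
        exact mul_le_mul_of_nonneg_left (hmin hs') hs
    rw [intervalIntegral.integral_mul_const] at h3
    have hμ0 : 0 < μ := lt_trans (by positivity) hμρ
    have h4 : 1 / M * μ ≤ (∫ s in a..b, k t s) * μ := by gcongr
    have h5 : ρ < 1 / M * μ := by
      rw [one_div, lt_inv_mul_iff₀ hMpos]; exact hμρ
    linarith

/-- The superposition operator. -/
lemma ham_nemytskii (f : ℝ → ℝ → ℝ → ℝ)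
    (hf : ContinuousOn (fun p : ℝ × ℝ × ℝ => f p.1 p.2.1 p.2.2)
      (Set.Icc 0 1 ×ˢ (Set.univ : Set (ℝ × ℝ)))) :
    ∃ N : C(Set.Icc (0:ℝ) 1, ℝ) × C(Set.Icc (0:ℝ) 1, ℝ) → C(Set.Icc (0:ℝ) 1, ℝ),
      Continuous N ∧ ∀ w s, N w s = f s (w.1 s) (w.2 s) := by
  have h : Continuous fun p : (C(Set.Icc (0:ℝ) 1, ℝ) × C(Set.Icc (0:ℝ) 1, ℝ)) × Set.Icc (0:ℝ) 1 =>
      f p.2 (p.1.1 p.2) (p.1.2 p.2) := by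
    have h1 : Continuous fun p : (C(Set.Icc (0:ℝ) 1, ℝ) × C(Set.Icc (0:ℝ) 1, ℝ)) ×
      Set.Icc (0:ℝ) 1 => ((p.2 : ℝ), p.1.1 p.2, p.1.2 p.2) := by fun_prop
    exact hf.comp_continuous h1 (fun p => ⟨p.2.2, mem_univ _⟩)
  exact ⟨fun w => ⟨fun s => f s (w.1 s) (w.2 s), h.comp (by fun_prop : Continuous fun s => (w, s))⟩,
    ContinuousMap.continuous_of_continuous_uncurry _ h, fun w s => rfl⟩

/-- Minimum of a continuous function over a subinterval. -/
lemma ham_min (a b : ℝ) (ha : 0 ≤ a) (hab : a ≤ b) (hb : b ≤ 1) :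
    ∃ mn : C(Set.Icc (0:ℝ) 1, ℝ) → ℝ, Continuous mn ∧
      (∀ u (t : Set.Icc (0:ℝ) 1), t.1 ∈ Set.Icc a b → mn u ≤ u t) ∧
      (∀ u, ∃ t : Set.Icc (0:ℝ) 1, t.1 ∈ Set.Icc a b ∧ u t = mn u) := by
  let A : Set (Set.Icc (0:ℝ) 1) := {t | t.1 ∈ Set.Icc a b}
  have hA : IsCompact A := (isClosed_Icc.preimage continuous_subtype_val).isCompact
  have hne : A.Nonempty := ⟨⟨a, ha, hab.trans hb⟩, left_mem_Icc.2 hab⟩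
  refine ⟨fun u => sInf (u '' A), ?_, ?_, ?_⟩
  · apply hA.continuous_sInf (f := fun (u : C(Set.Icc (0:ℝ) 1, ℝ)) t => u t)
    exact (by fun_prop : Continuous fun p : C(Set.Icc (0:ℝ) 1, ℝ) × Set.Icc (0:ℝ) 1 => p.1 p.2)
  · intro u t ht
    exact csInf_le (hA.image u.continuous).bddBelow ⟨t, ht, rfl⟩
  · intro u
    obtain ⟨t, ht, h⟩ := hA.exists_sInf_image_eq hne u.continuous.continuousOn
    exact ⟨t, ht, h.symm⟩

theorem existence_S1
    (k₁ k₂ : ℝ → ℝ → ℝ) (f₁ f₂ : ℝ → ℝ → ℝ → ℝ) (Φ₁ Φ₂ : ℝ → ℝ)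
    (a₁ b₁ c₁ a₂ b₂ c₂ : ℝ)
    (hk₁ : ContinuousOn (fun p : ℝ × ℝ => k₁ p.1 p.2) (Set.Icc 0 1 ×ˢ Set.Icc 0 1))
    (hk₂ : ContinuousOn (fun p : ℝ × ℝ => k₂ p.1 p.2) (Set.Icc 0 1 ×ˢ Set.Icc 0 1))
    (ha₁ : 0 ≤ a₁) (hab₁ : a₁ ≤ b₁) (hb₁ : b₁ ≤ 1)
    (ha₂ : 0 ≤ a₂) (hab₂ : a₂ ≤ b₂) (hb₂ : b₂ ≤ 1)
    (hc₁ : c₁ ∈ Set.Ioc (0:ℝ) 1) (hc₂ : c₂ ∈ Set.Ioc (0:ℝ) 1)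
    (hΦ₁meas : Measurable Φ₁) (hΦ₂meas : Measurable Φ₂)
    (hΦ₁nn : ∀ s ∈ Set.Icc (0:ℝ) 1, 0 ≤ Φ₁ s) (hΦ₂nn : ∀ s ∈ Set.Icc (0:ℝ) 1, 0 ≤ Φ₂ s)
    (hΦ₁bdd : ∃ C : ℝ, ∀ᵐ s ∂(volume.restrict (Set.Icc (0:ℝ) 1)), |Φ₁ s| ≤ C)
    (hΦ₂bdd : ∃ C : ℝ, ∀ᵐ s ∂(volume.restrict (Set.Icc (0:ℝ) 1)), |Φ₂ s| ≤ C)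
    (hΦ₁pos : 0 < ∫ s in a₁..b₁, Φ₁ s) (hΦ₂pos : 0 < ∫ s in a₂..b₂, Φ₂ s)
    (hub₁ : ∀ t ∈ Set.Icc (0:ℝ) 1, ∀ᵐ s ∂(volume.restrict (Set.Icc (0:ℝ) 1)), |k₁ t s| ≤ Φ₁ s)
    (hub₂ : ∀ t ∈ Set.Icc (0:ℝ) 1, ∀ᵐ s ∂(volume.restrict (Set.Icc (0:ℝ) 1)), |k₂ t s| ≤ Φ₂ s)
    (hlb₁ : ∀ t ∈ Set.Icc a₁ b₁, ∀ᵐ s ∂(volume.restrict (Set.Icc (0:ℝ) 1)), c₁ * Φ₁ s ≤ k₁ t s)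
    (hlb₂ : ∀ t ∈ Set.Icc a₂ b₂, ∀ᵐ s ∂(volume.restrict (Set.Icc (0:ℝ) 1)), c₂ * Φ₂ s ≤ k₂ t s)
    (hf₁ : ContinuousOn (fun p : ℝ × ℝ × ℝ => f₁ p.1 p.2.1 p.2.2)
      (Set.Icc 0 1 ×ˢ (Set.univ : Set (ℝ × ℝ))))
    (hf₂ : ContinuousOn (fun p : ℝ × ℝ × ℝ => f₂ p.1 p.2.1 p.2.2)
      (Set.Icc 0 1 ×ˢ (Set.univ : Set (ℝ × ℝ))))
    (hf₁nn : ∀ t ∈ Set.Icc (0:ℝ) 1, ∀ x y : ℝ, 0 ≤ f₁ t x y)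
    (hf₂nn : ∀ t ∈ Set.Icc (0:ℝ) 1, ∀ x y : ℝ, 0 ≤ f₂ t x y)
    (m₁ m₂ M₁ M₂ : ℝ)
    (hm₁pos : 0 < m₁) (hm₂pos : 0 < m₂)
    (hm₁ : 1 / m₁ = ⨆ t : Set.Icc (0:ℝ) 1, ∫ s in (0:ℝ)..1, |k₁ t.1 s|)
    (hm₂ : 1 / m₂ = ⨆ t : Set.Icc (0:ℝ) 1, ∫ s in (0:ℝ)..1, |k₂ t.1 s|)
    (hM₁pos : 0 < M₁) (hM₂pos : 0 < M₂)
    (hinf₁pos : 0 < ⨅ t : Set.Icc a₁ b₁, ∫ s in a₁..b₁, k₁ t.1 s)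
    (hinf₂pos : 0 < ⨅ t : Set.Icc a₂ b₂, ∫ s in a₂..b₂, k₂ t.1 s)
    (hM₁ : 1 / M₁ = ⨅ t : Set.Icc a₁ b₁, ∫ s in a₁..b₁, k₁ t.1 s)
    (hM₂ : 1 / M₂ = ⨅ t : Set.Icc a₂ b₂, ∫ s in a₂..b₂, k₂ t.1 s)
    (ρ₁ ρ₂ r₁ r₂ : ℝ) (hρ₁ : 0 < ρ₁) (hρ₂ : 0 < ρ₂) (hr₁pos : 0 < r₁) (hr₂pos : 0 < r₂)
    (hr₁ : ρ₁ / c₁ < r₁) (hr₂ : ρ₂ / c₂ < r₂)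
    (hI0 : condI0 f₁ f₂ a₁ b₁ c₁ a₂ b₂ c₂ M₁ M₂ ρ₁ ρ₂)
    (hI1 : condI1 f₁ f₂ m₁ m₂ r₁ r₂)
    :
    ∃ u v : ℝ → ℝ, nontrivialSolution k₁ k₂ f₁ f₂ a₁ b₁ c₁ a₂ b₂ c₂ u v := by
  classical
  obtain ⟨L₁, hL₁c, hL₁d, hL₁Q, hL₁K, hL₁u, hL₁l⟩ := ham_comp k₁ Φ₁ a₁ b₁ c₁ hk₁ ha₁ hab₁ hb₁ hc₁
    hΦ₁meas hΦ₁nn hΦ₁bdd hub₁ hlb₁ m₁ M₁ hm₁pos hm₁ hM₁pos hinf₁pos hM₁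
  obtain ⟨L₂, hL₂c, hL₂d, hL₂Q, hL₂K, hL₂u, hL₂l⟩ := ham_comp k₂ Φ₂ a₂ b₂ c₂ hk₂ ha₂ hab₂ hb₂ hc₂
    hΦ₂meas hΦ₂nn hΦ₂bdd hub₂ hlb₂ m₂ M₂ hm₂pos hm₂ hM₂pos hinf₂pos hM₂
  obtain ⟨N₁, hN₁c, hN₁⟩ := ham_nemytskii f₁ hf₁
  obtain ⟨N₂, hN₂c, hN₂⟩ := ham_nemytskii f₂ hf₂
  obtain ⟨mn₁, hmn₁c, hmn₁le, hmn₁ex⟩ := ham_min a₁ b₁ ha₁ hab₁ hb₁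
  obtain ⟨mn₂, hmn₂c, hmn₂le, hmn₂ex⟩ := ham_min a₂ b₂ ha₂ hab₂ hb₂
  have hN₁0 : ∀ w s, 0 ≤ N₁ w s := fun w s => by rw [hN₁]; exact hf₁nn s s.2 _ _
  have hN₂0 : ∀ w s, 0 ≤ N₂ w s := fun w s => by rw [hN₂]; exact hf₂nn s s.2 _ _
  let q : C(Set.Icc (0:ℝ) 1, ℝ) × C(Set.Icc (0:ℝ) 1, ℝ) → ℝ :=
    fun w => max (mn₁ w.1 / ρ₁) (mn₂ w.2 / ρ₂)
  let τ : C(Set.Icc (0:ℝ) 1, ℝ) × C(Set.Icc (0:ℝ) 1, ℝ) → ℝ := fun w => max 0 (1 - q w)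
  have hτc : Continuous τ := by
    have h1 : Continuous q :=
      ((hmn₁c.comp continuous_fst).div_const _).max ((hmn₂c.comp continuous_snd).div_const _)
    exact continuous_const.max (continuous_const.sub h1)
  have hτ0 : ∀ w, 0 ≤ τ w := fun w => le_max_left _ _
  let sh : C(Set.Icc (0:ℝ) 1, ℝ) × C(Set.Icc (0:ℝ) 1, ℝ) →
      C(Set.Icc (0:ℝ) 1, ℝ) × C(Set.Icc (0:ℝ) 1, ℝ) := fun w =>
    (w.1 + (τ w * ρ₁) • 1, w.2 + (τ w * ρ₂) • 1)
  have hshc : Continuous sh := by fun_prop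
  have hsh1 : ∀ w t, (sh w).1 t = w.1 t + τ w * ρ₁ := fun w t => by simp [sh]
  have hsh2 : ∀ w t, (sh w).2 t = w.2 t + τ w * ρ₂ := fun w t => by simp [sh]
  let C : Set (C(Set.Icc (0:ℝ) 1, ℝ) × C(Set.Icc (0:ℝ) 1, ℝ)) :=
    {w | (∀ t : Set.Icc (0:ℝ) 1, t.1 ∈ Set.Icc a₁ b₁ → c₁ * ‖w.1‖ ≤ w.1 t) ∧
      (∀ t : Set.Icc (0:ℝ) 1, t.1 ∈ Set.Icc a₂ b₂ → c₂ * ‖w.2‖ ≤ w.2 t) ∧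
      ‖w.1‖ ≤ r₁ ∧ ‖w.2‖ ≤ r₂}
  -- estimates for the shifted pair
  have hcase : ∀ w ∈ C, 0 < τ w →
      (mn₁ w.1 + τ w * ρ₁ ≤ ρ₁ ∧ mn₂ w.2 + τ w * ρ₂ ≤ ρ₂) ∧
      (mn₁ w.1 + τ w * ρ₁ = ρ₁ ∨ mn₂ w.2 + τ w * ρ₂ = ρ₂) := by
    intro w _ hτ
    have hτe : τ w = 1 - q w := by
      rcases max_choice 0 (1 - q w) with h | h
      · exact absurd h hτ.ne'
      · exact h
    have e1 : mn₁ w.1 / ρ₁ * ρ₁ = mn₁ w.1 := div_mul_cancel₀ _ hρ₁.ne'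
    have e2 : mn₂ w.2 / ρ₂ * ρ₂ = mn₂ w.2 := div_mul_cancel₀ _ hρ₂.ne'
    have q1 : mn₁ w.1 / ρ₁ ≤ q w := le_max_left _ _
    have q2 : mn₂ w.2 / ρ₂ ≤ q w := le_max_right _ _
    refine ⟨⟨by rw [hτe]; nlinarith, by rw [hτe]; nlinarith⟩, ?_⟩
    rcases max_choice (mn₁ w.1 / ρ₁) (mn₂ w.2 / ρ₂) with h | h
    · left
      have h' : q w = mn₁ w.1 / ρ₁ := h
      rw [hτe, h']; linarith
    · right
      have h' : q w = mn₂ w.2 / ρ₂ := h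
      rw [hτe, h']; linarith
  have hnorm1 : ∀ (u : C(Set.Icc (0:ℝ) 1, ℝ)) (x : ℝ), 0 ≤ x → ‖u + x • 1‖ ≤ ‖u‖ + x := by
    intro u x hx
    refine (ContinuousMap.norm_le _ (by positivity)).2 fun t => ?_
    simp only [ContinuousMap.add_apply, ContinuousMap.smul_apply, ContinuousMap.one_apply,
      smul_eq_mul, mul_one]
    refine (norm_add_le _ _).trans ?_
    rw [Real.norm_of_nonneg hx]
    have := u.norm_coe_le_norm t
    linarith
  have hsmall : ∀ w ∈ C, 0 < τ w → ‖(sh w).1‖ ≤ ρ₁ / c₁ ∧ ‖(sh w).2‖ ≤ ρ₂ / c₂ := by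
    intro w hw hτ
    obtain ⟨⟨h1, h2⟩, -⟩ := hcase w hw hτ
    constructor
    · rw [le_div_iff₀ hc₁.1]
      obtain ⟨t, ht, hte⟩ := hmn₁ex w.1
      have h3 := hw.1 t ht
      have h4 := hnorm1 w.1 (τ w * ρ₁) (by positivity)
      have h5 : c₁ * (τ w * ρ₁) ≤ τ w * ρ₁ := mul_le_of_le_one_left (by positivity) hc₁.2
      have h6 : ‖(sh w).1‖ * c₁ ≤ (‖w.1‖ + τ w * ρ₁) * c₁ :=
        mul_le_mul_of_nonneg_right h4 hc₁.1.le
      linarith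
    · rw [le_div_iff₀ hc₂.1]
      obtain ⟨t, ht, hte⟩ := hmn₂ex w.2
      have h3 := hw.2.1 t ht
      have h4 := hnorm1 w.2 (τ w * ρ₂) (by positivity)
      have h5 : c₂ * (τ w * ρ₂) ≤ τ w * ρ₂ := mul_le_of_le_one_left (by positivity) hc₂.2
      have h6 : ‖(sh w).2‖ * c₂ ≤ (‖w.2‖ + τ w * ρ₂) * c₂ :=
        mul_le_mul_of_nonneg_right h4 hc₂.1.le
      linarith
  have hsh0 : ∀ w, τ w = 0 → sh w = w := fun w h => by simp [sh, h]
  have hshr : ∀ w ∈ C, ‖(sh w).1‖ ≤ r₁ ∧ ‖(sh w).2‖ ≤ r₂ := by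
    intro w hw
    rcases (hτ0 w).eq_or_lt with h | h
    · rw [hsh0 w h.symm]; exact hw.2.2
    · obtain ⟨h1, h2⟩ := hsmall w hw h
      exact ⟨h1.trans hr₁.le, h2.trans hr₂.le⟩
  have hmem : ∀ (u : C(Set.Icc (0:ℝ) 1, ℝ)) (t : Set.Icc (0:ℝ) 1) (x : ℝ), ‖u‖ ≤ x →
      u t ∈ Set.Icc (-x) x := fun u t x h => abs_le.1 ((u.norm_coe_le_norm t).trans h)
  have hNb : ∀ w ∈ C, ∀ s, N₁ (sh w) s ≤ m₁ * r₁ ∧ N₂ (sh w) s ≤ m₂ * r₂ := by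
    intro w hw s
    obtain ⟨h1, h2⟩ := hshr w hw
    have := hI1 s s.2 _ (hmem (sh w).1 s _ h1) _ (hmem (sh w).2 s _ h2)
    rw [hN₁, hN₂]
    exact ⟨this.1.le, this.2.le⟩
  obtain ⟨Q₁, hQ₁, hQ₁m⟩ := hL₁Q (m₁ * r₁)
  obtain ⟨Q₂, hQ₂, hQ₂m⟩ := hL₂Q (m₂ * r₂)
  obtain ⟨w, hwC, hfix⟩ := schauder_fp C (Q₁ ×ˢ Q₂) (by
      intro w hw w' hw' x y hx hy hxy
      have key : ∀ (u u' : C(Set.Icc (0:ℝ) 1, ℝ)), ‖x • u + y • u'‖ ≤ x * ‖u‖ + y * ‖u'‖ := by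
        intro u u'
        refine (norm_add_le _ _).trans ?_
        rw [norm_smul, norm_smul, Real.norm_of_nonneg hx, Real.norm_of_nonneg hy]
      refine ⟨fun t ht => ?_, fun t ht => ?_, ?_, ?_⟩
      · have h1 := mul_le_mul_of_nonneg_left (key w.1 w'.1) hc₁.1.le
        have h2 := mul_le_mul_of_nonneg_left (hw.1 t ht) hx
        have h3 := mul_le_mul_of_nonneg_left (hw'.1 t ht) hy
        show c₁ * ‖x • w.1 + y • w'.1‖ ≤ x * w.1 t + y * w'.1 t
        linarith
      · have h1 := mul_le_mul_of_nonneg_left (key w.2 w'.2) hc₂.1.le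
        have h2 := mul_le_mul_of_nonneg_left (hw.2.1 t ht) hx
        have h3 := mul_le_mul_of_nonneg_left (hw'.2.1 t ht) hy
        show c₂ * ‖x • w.2 + y • w'.2‖ ≤ x * w.2 t + y * w'.2 t
        linarith
      · have h2 := mul_le_mul_of_nonneg_left hw.2.2.1 hx
        have h3 := mul_le_mul_of_nonneg_left hw'.2.2.1 hy
        have h4 : x * r₁ + y * r₁ = r₁ := by rw [← add_mul, hxy, one_mul]
        have := key w.1 w'.1
        show ‖x • w.1 + y • w'.1‖ ≤ r₁
        linarith
      · have h2 := mul_le_mul_of_nonneg_left hw.2.2.2 hx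
        have h3 := mul_le_mul_of_nonneg_left hw'.2.2.2 hy
        have h4 : x * r₂ + y * r₂ = r₂ := by rw [← add_mul, hxy, one_mul]
        have := key w.2 w'.2
        show ‖x • w.2 + y • w'.2‖ ≤ r₂
        linarith)
    (by
      simp only [C, setOf_and, setOf_forall]
      refine IsClosed.inter ?_ (IsClosed.inter ?_ (IsClosed.inter ?_ ?_))
      · exact isClosed_iInter fun t => isClosed_iInter fun _ =>
          isClosed_le (by fun_prop) (by fun_prop)
      · exact isClosed_iInter fun t => isClosed_iInter fun _ =>
          isClosed_le (by fun_prop) (by fun_prop)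
      · exact isClosed_le (by fun_prop) (by fun_prop)
      · exact isClosed_le (by fun_prop) (by fun_prop))
    ⟨0, by simp [C, hr₁pos.le, hr₂pos.le]⟩ (hQ₁.prod hQ₂)
    (fun w => (L₁ (N₁ (sh w)), L₂ (N₂ (sh w))))
    (((hL₁c.comp (hN₁c.comp hshc)).prodMk (hL₂c.comp (hN₂c.comp hshc))).continuousOn)
    (fun w hw => ⟨hL₁K _ (hN₁0 _), hL₂K _ (hN₂0 _),
      hL₁u _ (hN₁0 _) r₁ hr₁pos fun s => (hNb w hw s).1,
      hL₂u _ (hN₂0 _) r₂ hr₂pos fun s => (hNb w hw s).2⟩)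
    (fun w hw => ⟨hQ₁m _ ((ContinuousMap.norm_le _ (by positivity)).2 fun s => by
        rw [Real.norm_of_nonneg (hN₁0 _ _)]; exact (hNb w hw s).1),
      hQ₂m _ ((ContinuousMap.norm_le _ (by positivity)).2 fun s => by
        rw [Real.norm_of_nonneg (hN₂0 _ _)]; exact (hNb w hw s).2)⟩)
  have hfix1 : L₁ (N₁ (sh w)) = w.1 := congrArg Prod.fst hfix
  have hfix2 : L₂ (N₂ (sh w)) = w.2 := congrArg Prod.snd hfix
  have hτw : τ w = 0 := by
    by_contra hne
    have hτ : 0 < τ w := lt_of_le_of_ne (hτ0 w) (Ne.symm hne)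
    obtain ⟨hs1, hs2⟩ := hsmall w hwC hτ
    rcases (hcase w hwC hτ).2 with he | he
    · have h1 := hL₁l (N₁ (sh w)) (hN₁0 _) ρ₁ hρ₁ (by
        intro s hs
        rw [hN₁]
        refine hI0.1 s hs _ ⟨?_, (hmem _ s _ hs1).2⟩ _ (hmem _ s _ hs2)
        rw [hsh1]
        have := hmn₁le w.1 s hs
        linarith)
      obtain ⟨t, ht, hte⟩ := hmn₁ex w.1
      have h2 := h1 t ht
      rw [hfix1, hte] at h2
      have : 0 < τ w * ρ₁ := by positivity
      linarith
    · have h1 := hL₂l (N₂ (sh w)) (hN₂0 _) ρ₂ hρ₂ (by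
        intro s hs
        rw [hN₂]
        refine hI0.2 s hs _ (hmem _ s _ hs1) _ ⟨?_, (hmem _ s _ hs2).2⟩
        rw [hsh2]
        have := hmn₂le w.2 s hs
        linarith)
      obtain ⟨t, ht, hte⟩ := hmn₂ex w.2
      have h2 := h1 t ht
      rw [hfix2, hte] at h2
      have : 0 < τ w * ρ₂ := by positivity
      linarith
  rw [hsh0 w hτw] at hfix1 hfix2
  have hq : 1 ≤ q w := by
    have : 1 - q w ≤ τ w := le_max_right _ _
    linarith
  let ext : C(Set.Icc (0:ℝ) 1, ℝ) → ℝ → ℝ := fun u t => u (Set.projIcc 0 1 zero_le_one t)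
  have hext : ∀ (u : C(Set.Icc (0:ℝ) 1, ℝ)) (t : Set.Icc (0:ℝ) 1), ext u t = u t := fun u t => by
    simp only [ext, Set.projIcc_val]
  have hextc : ∀ u, Continuous (ext u) := fun u => u.continuous.comp continuous_projIcc
  have hne01 : Nonempty (Set.Icc (0:ℝ) 1) := ⟨⟨0, by simp⟩⟩
  have hsup : ∀ u, supNorm (ext u) ≤ ‖u‖ := fun u => ciSup_le fun t => u.norm_coe_le_norm _
  have hle : ∀ u (t : Set.Icc (0:ℝ) 1), |u t| ≤ supNorm (ext u) := fun u t => by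
    rw [← hext u t]
    exact le_ciSup (f := fun t : Set.Icc (0:ℝ) 1 => |ext u t.1|)
      ⟨‖u‖, by rintro _ ⟨t, rfl⟩; exact u.norm_coe_le_norm _⟩ t
  have hcone : ∀ (a b c : ℝ) (u : C(Set.Icc (0:ℝ) 1, ℝ)), 0 ≤ a → a ≤ b → b ≤ 1 → 0 < c →
      (∀ t : Set.Icc (0:ℝ) 1, t.1 ∈ Set.Icc a b → c * ‖u‖ ≤ u t) →
      c * supNorm (ext u) ≤ infOn a b (ext u) := by
    intro a b c u ha hab hb hc h
    refine (mul_le_mul_of_nonneg_left (hsup u) hc.le).trans ?_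
    have : Nonempty (Set.Icc a b) := ⟨⟨a, left_mem_Icc.2 hab⟩⟩
    refine le_ciInf fun t => ?_
    have ht : t.1 ∈ Set.Icc (0:ℝ) 1 := Set.Icc_subset_Icc ha hb t.2
    have h1 := h ⟨t.1, ht⟩ t.2
    rwa [← hext u ⟨t.1, ht⟩] at h1
  refine ⟨ext w.1, ext w.2, ⟨(hextc _).continuousOn, (hextc _).continuousOn,
    hcone a₁ b₁ c₁ w.1 ha₁ hab₁ hb₁ hc₁.1 hwC.1, hcone a₂ b₂ c₂ w.2 ha₂ hab₂ hb₂ hc₂.1 hwC.2.1⟩,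
    ⟨?_, ?_⟩, ?_⟩
  · intro t ht
    have h1 := hext w.1 ⟨t, ht⟩
    rw [← hfix1, hL₁d, hfix1] at h1
    rw [h1]
    apply intervalIntegral.integral_congr
    intro s hs
    rw [uIcc_of_le zero_le_one] at hs
    simp only [hN₁, ext, Set.projIcc_of_mem zero_le_one hs]
  · intro t ht
    have h1 := hext w.2 ⟨t, ht⟩
    rw [← hfix2, hL₂d, hfix2] at h1
    rw [h1]
    apply intervalIntegral.integral_congr
    intro s hs
    rw [uIcc_of_le zero_le_one] at hs
    simp only [hN₂, ext, Set.projIcc_of_mem zero_le_one hs]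
  · rcases le_max_iff.1 hq with h | h
    · apply lt_max_of_lt_left
      rw [le_div_iff₀ hρ₁, one_mul] at h
      obtain ⟨t, -, hte⟩ := hmn₁ex w.1
      have := hle w.1 t
      have := le_abs_self (w.1 t)
      linarith
    · apply lt_max_of_lt_right
      rw [le_div_iff₀ hρ₂, one_mul] at h
      obtain ⟨t, -, hte⟩ := hmn₂ex w.2
      have := hle w.2 t
      have := le_abs_self (w.2 t)
      linarith
end

section
/- (Existence, case (S₁) with starred condition) Suppose there exist ρ₁,ρ₂,r₁,r₂ ∈ (0,∞) with ρ₁/c₁ < r₁ and ρ₂/c₂ < r₂ such that condition (I⁰_{ρ₁,ρ₂})* holds and condition (I¹_{r₁,r₂}) holds. Then the system (*) has at least one nontrivial solution in K. -/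
open MeasureTheory Set

section Scarf

set_option linter.unusedSectionVars false

variable {V I L : Type*} [Fintype V] [DecidableEq V] [Fintype I] [DecidableEq I] [LinearOrder L]

def ScarfDom (w : I → V → L) (R : Finset V) : Prop := ∀ y, ∃ i, ∀ x ∈ R, w i y ≤ w i x

theorem ScarfDom.mono {w : I → V → L} {R R' : Finset V} (h : ScarfDom w R) (hR : R' ⊆ R) :
    ScarfDom w R' := fun y => (h y).imp fun _ hi x hx => hi x (hR hx)

theorem scarf_door (w : I → V → L) (hw : ∀ i, Function.Injective (w i)) (R : Finset V)
    (hR : R.Nonempty) (hdom : ScarfDom w R) (hcard : R.card + 1 = Fintype.card I) :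
    ∃ (a : I → V) (j₁ j₂ : I), j₁ ≠ j₂ ∧ a j₁ = a j₂ ∧ (∀ i, a i ∈ R) ∧
      (∀ i, ∀ x ∈ R, w i (a i) ≤ w i x) ∧
      ∀ x, (x ∉ R ∧ ScarfDom w (insert x R)) ↔
        ∃ j, (j = j₁ ∨ j = j₂) ∧ (∀ i, i ≠ j → w i (a i) < w i x) ∧
          ∀ y, (∀ i, i ≠ j → w i (a i) < w i y) → w j y ≤ w j x := by
  have h1 : ∀ i, ∃ z ∈ R, ∀ x ∈ R, w i z ≤ w i x := fun i => R.exists_min_image (w i) hR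
  choose a haR hamin using h1
  have hsurj : ∀ x ∈ R, ∃ i, a i = x := by
    intro x hx
    obtain ⟨i, hi⟩ := hdom x
    exact ⟨i, hw i (le_antisymm (hamin i x hx) (hi _ (haR i)))⟩
  have hninj : ¬ Function.Injective a := by
    intro hinj
    have : (Finset.univ.image a).card ≤ R.card := Finset.card_le_card (by
      intro x hx; simp at hx; obtain ⟨i, rfl⟩ := hx; exact haR i)
    rw [Finset.card_image_of_injective _ hinj, Finset.card_univ] at this
    omega
  simp only [Function.Injective, not_forall] at hninj
  obtain ⟨j₁, j₂, hj, hne⟩ := hninj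
  have hsurjE : ∀ j, (j = j₁ ∨ j = j₂) → ∀ x ∈ R, ∃ i, i ≠ j ∧ a i = x := by
    intro j hjj x hx
    obtain ⟨i, hi⟩ := hsurj x hx
    by_cases hij : i = j
    · rcases hjj with h | h
      · exact ⟨j₂, by rw [h]; exact Ne.symm hne, by rw [← hj, ← h, ← hij, hi]⟩
      · exact ⟨j₁, by rw [h]; exact hne, by rw [hj, ← h, ← hij, hi]⟩
    · exact ⟨i, hij, hi⟩
  refine ⟨a, j₁, j₂, hne, hj, haR, hamin, ?_⟩
  intro x
  constructor
  · rintro ⟨hxR, hD⟩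
    obtain ⟨j, hjx⟩ := hD x
    have hz : ∀ z ∈ R, ∃ i, i ≠ j ∧ a i = z ∧ w i z ≤ w i x := by
      intro z hz
      obtain ⟨i, hi⟩ := hD z
      refine ⟨i, ?_, ?_, hi x (Finset.mem_insert_self _ _)⟩
      · rintro rfl
        have : x = z := hw i (le_antisymm (hjx z (Finset.mem_insert_of_mem hz))
          (hi x (Finset.mem_insert_self _ _)))
        exact hxR (this ▸ hz)
      · exact hw i (le_antisymm (hamin i z hz) (hi _ (Finset.mem_insert_of_mem (haR i))))
    have hinj : Set.InjOn a (Finset.univ.erase j : Finset I) := by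
      apply Finset.injOn_of_surjOn_of_card_le (t := R) a
      · intro i _; exact haR i
      · intro z hzR
        obtain ⟨i, h1, h2, _⟩ := hz z hzR
        exact ⟨i, by simpa using h1, h2⟩
      · rw [Finset.card_erase_of_mem (Finset.mem_univ _), Finset.card_univ]; omega
    refine ⟨j, ?_, ?_, ?_⟩
    · by_contra hcon
      push Not at hcon
      exact hne (hinj (by simpa using Ne.symm hcon.1) (by simpa using Ne.symm hcon.2) hj)
    · intro i hij
      obtain ⟨i', h1, h2, h3⟩ := hz (a i) (haR i)
      have : i' = i := hinj (by simpa using h1) (by simpa using hij) h2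
      subst this
      refine lt_of_le_of_ne h3 fun h => hxR ?_
      rw [← hw i' h]; exact haR i'
    · intro y hy
      obtain ⟨i, hi⟩ := hD y
      by_cases hij : i = j
      · subst hij; exact hi x (Finset.mem_insert_self _ _)
      · exact absurd (hi (a i) (Finset.mem_insert_of_mem (haR i))) (not_le.2 (hy i hij))
  · rintro ⟨j, hjj, hxS, hmax⟩
    have hxR : x ∉ R := by
      intro hx
      obtain ⟨i, hij, hi⟩ := hsurjE j hjj x hx
      have := hxS i hij
      rw [hi] at this
      exact lt_irrefl _ this
    refine ⟨hxR, ?_⟩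
    intro y
    by_cases hy : ∀ i, i ≠ j → w i (a i) < w i y
    · refine ⟨j, ?_⟩
      intro z hz
      rcases Finset.mem_insert.1 hz with rfl | hz
      · exact hmax y hy
      · refine (hmax y hy).trans ?_
        obtain ⟨i, hi⟩ := hdom x
        by_cases hij : i = j
        · subst hij; exact hi z hz
        · exact absurd (hi (a i) (haR i)) (not_le.2 (hxS i hij))
    · push Not at hy
      obtain ⟨i, hij, hi⟩ := hy
      refine ⟨i, ?_⟩
      intro z hz
      rcases Finset.mem_insert.1 hz with rfl | hz
      · exact hi.trans (hxS i hij).le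
      · exact hi.trans (hamin i z hz)

open Classical in
theorem scarf_interior (w : I → V → L) (hw : ∀ i, Function.Injective (w i)) (s : I → V)
    (hs2 : ∀ i k, k ≠ i → ∀ t, t ∉ Set.range s → w i t < w i (s k)) (R : Finset V)
    (hdom : ScarfDom w R) (hcard : R.card + 1 = Fintype.card I)
    (t : V) (ht : t ∈ R) (hts : t ∉ Set.range s) :
    (Finset.univ.filter fun x => x ∉ R ∧ ScarfDom w (insert x R)).card = 2 := by
  obtain ⟨a, j₁, j₂, hne, hj, haR, hamin, hx⟩ := scarf_door w hw R ⟨t, ht⟩ hdom hcard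
  have hex : ∀ j, ∃ x, (∀ i, i ≠ j → w i (a i) < w i x) ∧
      ∀ y, (∀ i, i ≠ j → w i (a i) < w i y) → w j y ≤ w j x := by
    intro j
    obtain ⟨x, hx1, hx2⟩ := (Finset.univ.filter fun x => ∀ i, i ≠ j → w i (a i) < w i x).exists_max_image
      (w j) ⟨s j, by
        simp only [Finset.mem_filter, Finset.mem_univ, true_and]
        intro i hij
        exact (hamin i t ht).trans_lt (hs2 i j (Ne.symm hij) t hts)⟩
    simp only [Finset.mem_filter, Finset.mem_univ, true_and] at hx1 hx2
    exact ⟨x, hx1, hx2⟩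
  obtain ⟨x₁, h11, h12⟩ := hex j₁
  obtain ⟨x₂, h21, h22⟩ := hex j₂
  rw [Finset.card_eq_two]
  refine ⟨x₁, x₂, ?_, ?_⟩
  · rintro rfl
    obtain ⟨i, hi⟩ := hdom x₁
    have := hi (a i) (haR i)
    by_cases h : i = j₁
    · subst h; exact absurd this (not_le.2 (h21 i hne))
    · exact absurd this (not_le.2 (h11 i h))
  · ext x
    simp only [Finset.mem_filter, Finset.mem_univ, true_and, Finset.mem_insert, Finset.mem_singleton]
    rw [hx x]
    constructor
    · rintro ⟨j, rfl | rfl, h1, h2⟩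
      · left; exact hw _ (le_antisymm (h12 x h1) (h2 _ h11))
      · right; exact hw _ (le_antisymm (h22 x h1) (h2 _ h21))
    · rintro (rfl | rfl)
      · exact ⟨j₁, Or.inl rfl, h11, h12⟩
      · exact ⟨j₂, Or.inr rfl, h21, h22⟩

open Classical in
theorem scarf_boundary (w : I → V → L) (hw : ∀ i, Function.Injective (w i)) (s : I → V)
    (hs : Function.Injective s)
    (hs1 : ∀ i y, w i (s i) ≤ w i y)
    (hs2 : ∀ i k, k ≠ i → ∀ t, t ∉ Set.range s → w i t < w i (s k))
    (t : V) (hts : t ∉ Set.range s) (hI : 2 ≤ Fintype.card I) (i₀ : I) (R : Finset V)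
    (hR : R = (Finset.univ.erase i₀).image s)
    (hdom : ScarfDom w R) :
    (Finset.univ.filter fun x => x ∉ R ∧ ScarfDom w (insert x R)).card = 1 := by
  have hcard : R.card + 1 = Fintype.card I := by
    rw [hR, Finset.card_image_of_injective _ hs, Finset.card_erase_of_mem (Finset.mem_univ _),
      Finset.card_univ]; omega
  have hne : R.Nonempty := by rw [← Finset.card_pos]; omega
  obtain ⟨a, j₁, j₂, hne, hj, haR, hamin, hx⟩ := scarf_door w hw R hne hdom hcard
  have ha : ∀ i, i ≠ i₀ → a i = s i := by
    intro i hi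
    refine hw i (le_antisymm (hamin i _ ?_) (hs1 i _))
    rw [hR]; exact Finset.mem_image_of_mem _ (by simpa using hi)
  obtain ⟨j, hji, haj, hx⟩ : ∃ j, j ≠ i₀ ∧ a i₀ = s j ∧ ∀ x, (x ∉ R ∧ ScarfDom w (insert x R)) ↔
        ∃ j', (j' = i₀ ∨ j' = j) ∧ (∀ i, i ≠ j' → w i (a i) < w i x) ∧
          ∀ y, (∀ i, i ≠ j' → w i (a i) < w i y) → w j' y ≤ w j' x := by
    by_cases h1 : j₁ = i₀
    · subst h1
      exact ⟨j₂, Ne.symm hne, by rw [hj, ha _ (Ne.symm hne)], hx⟩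
    · by_cases h2 : j₂ = i₀
      · subst h2
        refine ⟨j₁, hne, by rw [← hj, ha _ hne], ?_⟩
        intro x; rw [hx x]
        simp only [or_comm]
      · rw [ha _ h1, ha _ h2] at hj
        exact absurd (hs hj) hne
  obtain ⟨x, hx1, hx2⟩ := (Finset.univ.filter fun x => ∀ i, i ≠ i₀ → w i (a i) < w i x).exists_max_image
      (w i₀) ⟨t, by
        simp only [Finset.mem_filter, Finset.mem_univ, true_and]
        intro i hij
        rw [ha i hij]
        refine lt_of_le_of_ne (hs1 i t) fun h => hts ⟨i, hw i h⟩⟩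
  simp only [Finset.mem_filter, Finset.mem_univ, true_and] at hx1 hx2
  rw [Finset.card_eq_one]
  refine ⟨x, ?_⟩
  ext z
  simp only [Finset.mem_filter, Finset.mem_univ, true_and, Finset.mem_singleton]
  rw [hx z]
  constructor
  · rintro ⟨j', rfl | rfl, h1, h2⟩
    · exact hw _ (le_antisymm (hx2 z h1) (h2 _ hx1))
    · exfalso
      by_cases hz : z ∈ Set.range s
      · obtain ⟨k, rfl⟩ := hz
        by_cases hk : k = j'
        · subst hk
          have := h1 i₀ (Ne.symm hji)
          rw [haj] at this
          exact lt_irrefl _ this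
        · exact absurd (hs1 k (a k)) (not_le.2 (h1 k hk))
      · have := h1 i₀ (Ne.symm hji)
        rw [haj] at this
        exact lt_asymm this (hs2 i₀ j' hji z hz)
  · rintro rfl
    exact ⟨i₀, Or.inl rfl, hx1, hx2⟩

theorem scarf_room (c : V → I) (i₀ : I) (R : Finset V) (hcard : R.card = Fintype.card I)
    (hnc : R.image c ≠ Finset.univ) :
    Even (R.filter fun v => (R.erase v).image c = Finset.univ.erase i₀).card := by
  by_cases hem : (R.filter fun v => (R.erase v).image c = Finset.univ.erase i₀) = ∅
  · rw [hem]; simp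
  obtain ⟨v, hv⟩ := Finset.nonempty_iff_ne_empty.2 hem
  obtain ⟨hvR, hv⟩ := Finset.mem_filter.1 hv
  have hinj : Set.InjOn c (R.erase v : Finset V) := by
    rw [← Finset.card_image_iff, hv, Finset.card_erase_of_mem (Finset.mem_univ _),
      Finset.card_erase_of_mem hvR, hcard, Finset.card_univ]
  have himg : R.image c = insert (c v) (Finset.univ.erase i₀) := by
    rw [← hv, ← Finset.image_insert, Finset.insert_erase hvR]
  have hcv : c v ≠ i₀ := by
    intro h
    rw [h, Finset.insert_erase (Finset.mem_univ _)] at himg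
    exact hnc himg
  have : c v ∈ (R.erase v).image c := by rw [hv]; simpa using hcv
  obtain ⟨v', hv', hcv'⟩ := Finset.mem_image.1 this
  obtain ⟨hne, hv'R⟩ := Finset.mem_erase.1 hv'
  have : (R.filter fun v => (R.erase v).image c = Finset.univ.erase i₀) = {v, v'} := by
    ext z
    simp only [Finset.mem_filter, Finset.mem_insert, Finset.mem_singleton]
    constructor
    · rintro ⟨hzR, hz⟩
      by_contra hcon
      push Not at hcon
      have hzv : z ∈ R.erase v := Finset.mem_erase.2 ⟨hcon.1, hzR⟩
      have : c z ∈ (R.erase z).image c := by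
        rw [hz, ← hv]; exact Finset.mem_image_of_mem _ hzv
      obtain ⟨y, hy, hyz⟩ := Finset.mem_image.1 this
      obtain ⟨hyne, hyR⟩ := Finset.mem_erase.1 hy
      by_cases hyv : y = v
      · subst hyv
        exact hcon.2 (hinj hzv hv' (by rw [← hyz, hcv']))
      · exact hyne (hinj (Finset.mem_coe.2 (Finset.mem_erase.2 ⟨hyv, hyR⟩)) hzv hyz)
    · rintro (rfl | rfl)
      · exact ⟨hvR, hv⟩
      · refine ⟨hv'R, ?_⟩
        rw [← hv]
        ext i
        simp only [Finset.mem_image, Finset.mem_erase]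
        constructor
        · rintro ⟨y, ⟨h1, h2⟩, rfl⟩
          by_cases hy : y = v
          · exact ⟨z, ⟨hne, hv'R⟩, by rw [hy, hcv']⟩
          · exact ⟨y, ⟨hy, h2⟩, rfl⟩
        · rintro ⟨y, ⟨h1, h2⟩, rfl⟩
          by_cases hy : y = z
          · exact ⟨v, ⟨Ne.symm hne, hvR⟩, by rw [hy, hcv']⟩
          · exact ⟨y, ⟨hy, h2⟩, rfl⟩
  rw [this, Finset.card_pair (Ne.symm hne)]
  exact even_two

open Classical in
theorem scarf_main (w : I → V → L) (hw : ∀ i, Function.Injective (w i)) (s : I → V)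
    (hs : Function.Injective s)
    (hs1 : ∀ i y, w i (s i) ≤ w i y)
    (hs2 : ∀ i k, k ≠ i → ∀ t, t ∉ Set.range s → w i t < w i (s k))
    (t : V) (hts : t ∉ Set.range s) (hI : 2 ≤ Fintype.card I)
    (c : V → I) (hc : ∀ i, c (s i) = i) :
    ∃ R : Finset V, R.card = Fintype.card I ∧ ScarfDom w R ∧ R.image c = Finset.univ := by
  by_contra hcon
  push Not at hcon
  have : Nonempty I := Fintype.card_pos_iff.1 (by omega)
  obtain ⟨i₀⟩ := this
  set rooms : Finset (Finset V) := Finset.univ.filter fun R => R.card = Fintype.card I ∧ ScarfDom w R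
    with hrooms
  set doors : Finset (Finset V) := Finset.univ.filter fun D => D.card + 1 = Fintype.card I ∧
    ScarfDom w D ∧ D.image c = Finset.univ.erase i₀ with hdoors
  have hdc := Finset.sum_card_bipartiteAbove_eq_sum_card_bipartiteBelow
    (s := doors) (t := rooms) (fun D R => D ⊆ R)
  have hRHS : Even (∑ R ∈ rooms, (Finset.bipartiteBelow (fun D R => D ⊆ R) doors R).card) := by
    apply Finset.even_sum
    intro R hR
    obtain ⟨hRc, hRd⟩ := (Finset.mem_filter.1 hR).2
    have := scarf_room c i₀ R hRc (hcon R hRc hRd)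
    suffices heq : (R.filter fun v => (R.erase v).image c = Finset.univ.erase i₀).card =
        (Finset.bipartiteBelow (fun D R => D ⊆ R) doors R).card by
      rw [← heq]; exact this
    apply Finset.card_bij (fun v _ => R.erase v)
    · intro v hv
      obtain ⟨hvR, hv⟩ := Finset.mem_filter.1 hv
      simp only [Finset.mem_bipartiteBelow, hdoors, Finset.mem_filter, Finset.mem_univ, true_and]
      refine ⟨⟨?_, hRd.mono (Finset.erase_subset _ _), hv⟩, Finset.erase_subset _ _⟩
      rw [Finset.card_erase_of_mem hvR]; omega
    · intro v hv v' hv' h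
      exact Finset.erase_injOn R (Finset.mem_filter.1 hv).1 (Finset.mem_filter.1 hv').1 h
    · intro D hD
      simp only [Finset.mem_bipartiteBelow, hdoors, Finset.mem_filter, Finset.mem_univ, true_and] at hD
      obtain ⟨⟨h1, h2, h3⟩, h4⟩ := hD
      have h5 : (R \ D).card = 1 := by rw [Finset.card_sdiff_of_subset h4]; omega
      obtain ⟨v, hv⟩ := Finset.card_eq_one.1 h5
      have hvR : v ∈ R \ D := by rw [hv]; simp
      have : R.erase v = D := by
        rw [Finset.erase_eq, ← hv, Finset.sdiff_sdiff_eq_self h4]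
      refine ⟨v, Finset.mem_filter.2 ⟨(Finset.mem_sdiff.1 hvR).1, by rw [this, h3]⟩, this⟩
  have hdoor : ∀ D ∈ doors, (Finset.bipartiteAbove (fun D R => D ⊆ R) rooms D).card =
      (Finset.univ.filter fun x => x ∉ D ∧ ScarfDom w (insert x D)).card := by
    intro D hD
    obtain ⟨hDc, hDd, hDi⟩ := (Finset.mem_filter.1 hD).2
    symm
    apply Finset.card_bij (fun x _ => insert x D)
    · intro x hx
      obtain ⟨hx1, hx2⟩ := (Finset.mem_filter.1 hx).2
      simp only [Finset.mem_bipartiteAbove, hrooms, Finset.mem_filter, Finset.mem_univ, true_and]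
      exact ⟨⟨by rw [Finset.card_insert_of_notMem hx1, hDc], hx2⟩, Finset.subset_insert _ _⟩
    · intro x hx y hy h
      have hx1 := (Finset.mem_filter.1 hx).2.1
      have : x ∈ insert y D := by rw [← h]; simp
      exact (Finset.mem_insert.1 this).resolve_right hx1
    · intro R hR
      simp only [Finset.mem_bipartiteAbove, hrooms, Finset.mem_filter, Finset.mem_univ, true_and] at hR
      obtain ⟨⟨h1, h2⟩, h4⟩ := hR
      have h5 : (R \ D).card = 1 := by rw [Finset.card_sdiff_of_subset h4]; omega
      obtain ⟨v, hv⟩ := Finset.card_eq_one.1 h5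
      have hvR : v ∈ R \ D := by rw [hv]; simp
      have : insert v D = R := by
        rw [Finset.insert_eq, ← hv, Finset.sdiff_union_of_subset h4]
      refine ⟨v, Finset.mem_filter.2 ⟨Finset.mem_univ _, (Finset.mem_sdiff.1 hvR).2, ?_⟩, this⟩
      rw [this]; exact h2
  set D₀ := (Finset.univ.erase i₀).image s with hD₀
  have hD₀d : ScarfDom w D₀ := by
    intro y
    by_cases hy : y ∈ Set.range s
    · obtain ⟨k, rfl⟩ := hy
      exact ⟨k, fun x _ => hs1 k x⟩
    · refine ⟨i₀, fun x hx => ?_⟩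
      obtain ⟨k, hk, rfl⟩ := Finset.mem_image.1 hx
      exact (hs2 i₀ k (by simpa using hk) y hy).le
  have hD₀m : D₀ ∈ doors := by
    simp only [hdoors, Finset.mem_filter, Finset.mem_univ, true_and]
    refine ⟨?_, hD₀d, ?_⟩
    · rw [hD₀, Finset.card_image_of_injective _ hs, Finset.card_erase_of_mem (Finset.mem_univ _),
        Finset.card_univ]; omega
    · rw [hD₀, Finset.image_image]
      have : c ∘ s = id := funext hc
      rw [this, Finset.image_id]
  rw [← hdc, ← Finset.add_sum_erase _ _ hD₀m, hdoor _ hD₀m,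
    scarf_boundary w hw s hs hs1 hs2 t hts hI i₀ D₀ hD₀ hD₀d] at hRHS
  have hE : Even (∑ D ∈ doors.erase D₀, (Finset.bipartiteAbove (fun D R => D ⊆ R) rooms D).card) := by
    apply Finset.even_sum
    intro D hD
    obtain ⟨hne, hD⟩ := Finset.mem_erase.1 hD
    rw [hdoor D hD]
    obtain ⟨hDc, hDd, hDi⟩ := (Finset.mem_filter.1 hD).2
    have : ∃ t ∈ D, t ∉ Set.range s := by
      by_contra hno
      push Not at hno
      apply hne
      ext x
      rw [hD₀, ← hDi, Finset.image_image, Finset.mem_image]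
      constructor
      · intro hx
        obtain ⟨i, rfl⟩ := hno x hx
        exact ⟨s i, hx, by simp [hc]⟩
      · rintro ⟨y, hy, rfl⟩
        obtain ⟨i, rfl⟩ := hno y hy
        simpa [hc] using hy
    obtain ⟨t', ht', hts'⟩ := this
    rw [scarf_interior w hw s hs2 D hDd hDc t' ht' hts']
    exact even_two
  rw [Nat.even_add] at hRHS
  exact absurd (hRHS.2 hE) (by decide)

end Scarf

set_option maxHeartbeats 1600000 in
theorem simplex_approx {I : Type*} [Fintype I] [DecidableEq I] (hI : 2 ≤ Fintype.card I)
    (f : (I → ℝ) → I → ℝ) (hf : ∀ x ∈ stdSimplex ℝ I, f x ∈ stdSimplex ℝ I)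
    (η : ℝ) (hη : 0 < η) :
    ∃ x ∈ stdSimplex ℝ I, ∀ i, ∃ x' ∈ stdSimplex ℝ I, dist x' x ≤ η ∧ x' i ≤ f x' i + η := by
  classical
  have hn : (0:ℝ) < Fintype.card I := by exact_mod_cast (by omega : 0 < Fintype.card I)
  set ε : ℝ := η / Fintype.card I with hε
  have hεpos : 0 < ε := by positivity
  obtain ⟨T₀, hT₀s, hT₀f, hT₀⟩ := Metric.finite_approx_of_totallyBounded
    (isCompact_stdSimplex ℝ I).totallyBounded ε hεpos
  set T := hT₀f.toFinset with hT
  have hTs : ∀ x ∈ T, x ∈ stdSimplex ℝ I := fun x hx => hT₀s (by simpa [hT] using hx)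
  have hnet : ∀ y ∈ stdSimplex ℝ I, ∃ x ∈ T, dist y x < ε := by
    intro y hy
    have := hT₀ hy
    simp only [Set.mem_iUnion, Metric.mem_ball] at this
    obtain ⟨x, hx, h⟩ := this
    exact ⟨x, by simpa [hT] using hx, h⟩
  have hcol : ∀ x : T, ∃ i, (x : I → ℝ) i ≤ f x i := by
    intro x
    by_contra hcon
    push Not at hcon
    have : Nonempty I := Fintype.card_pos_iff.1 (by omega)
    have h1 := Finset.sum_lt_sum_of_nonempty (Finset.univ_nonempty (α := I)) fun i _ => hcon i
    rw [(hf _ (hTs _ x.2)).2, (hTs _ x.2).2] at h1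
    exact lt_irrefl _ h1
  choose c₀ hc₀ using hcol
  let V := T ⊕ I
  let val : I → V → ℝ := fun i v => Sum.elim (fun t : T => (t : I → ℝ) i) (fun k => if k = i then -1 else 2) v
  let w : I → V → (ℝ ×ₗ ℕ) := fun i v => toLex (val i v, (Fintype.equivFin V v : ℕ))
  have hwle : ∀ i v v', w i v ≤ w i v' → val i v ≤ val i v' := by
    intro i v v' h
    rcases (Prod.Lex.le_iff).1 h with h | h
    · exact h.le
    · exact h.1.le
  have hwlt : ∀ i v v', val i v < val i v' → w i v < w i v' := by
    intro i v v' h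
    exact (Prod.Lex.lt_iff).2 (Or.inl h)
  have hwinj : ∀ i, Function.Injective (w i) := by
    intro i v v' h
    have : (ofLex (w i v)).2 = (ofLex (w i v')).2 := by rw [h]
    simpa [w, Fin.val_inj] using this
  have hval0 : ∀ i (t : T), 0 ≤ val i (Sum.inl t) := fun i t => (hTs _ t.2).1 i
  have hval1 : ∀ i (t : T), val i (Sum.inl t) ≤ 1 := by
    intro i t
    have h := hTs _ t.2
    calc (t : I → ℝ) i ≤ ∑ j, (t : I → ℝ) j := Finset.single_le_sum (fun j _ => h.1 j) (Finset.mem_univ i)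
      _ = 1 := h.2
  obtain ⟨i₁⟩ : Nonempty I := Fintype.card_pos_iff.1 (by omega)
  obtain ⟨t₀, ht₀, _⟩ := hnet _ (single_mem_stdSimplex ℝ i₁)
  obtain ⟨R, hRc, hRd, hRi⟩ := scarf_main (V := V) w hwinj Sum.inr Sum.inr_injective
    (by
      intro i y
      by_cases h : y = Sum.inr i
      · rw [h]
      · refine (hwlt i _ _ ?_).le
        rcases y with t | k
        · have := hval0 i t
          have h2 : val i (Sum.inr i) = -1 := by simp [val]
          linarith
        · have hk : k ≠ i := fun h' => h (by rw [h'])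
          simp [val, hk]; norm_num)
    (by
      rintro i k hki (t | k') ht
      · refine hwlt i _ _ ?_
        have := hval1 i t
        have h2 : val i (Sum.inr k) = 2 := by simp [val, hki]
        linarith
      · exact absurd ⟨k', rfl⟩ ht)
    (Sum.inl ⟨t₀, ht₀⟩) (by rintro ⟨k, hk⟩; exact absurd hk (by simp)) hI
    (Sum.elim c₀ id) (fun i => rfl)
  -- colors
  have hcolor : ∀ i, Sum.inr i ∈ R ∨ ∃ t : T, Sum.inl t ∈ R ∧ c₀ t = i := by
    intro i
    have : i ∈ R.image (Sum.elim c₀ id) := by rw [hRi]; simp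
    obtain ⟨v, hv, hvi⟩ := Finset.mem_image.1 this
    rcases v with t | k
    · exact Or.inr ⟨t, hv, hvi⟩
    · left; simp at hvi; rwa [← hvi]
  have hdomT : ∀ y : T, ∃ i, Sum.inr i ∉ R ∧ ∀ t : T, Sum.inl t ∈ R → (y : I → ℝ) i ≤ (t : I → ℝ) i := by
    intro y
    obtain ⟨i, hi⟩ := hRd (Sum.inl y)
    refine ⟨i, fun h => ?_, fun t ht => hwle i _ _ (hi _ ht)⟩
    have h1 := hwle i _ _ (hi _ h)
    have h2 : val i (Sum.inr i) = -1 := by simp [val]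
    have := hval0 i y
    linarith
  set σ : Finset T := Finset.univ.filter fun t => Sum.inl t ∈ R with hσ
  have hσne : σ.Nonempty := by
    obtain ⟨i, hi, -⟩ := hdomT ⟨t₀, ht₀⟩
    obtain ⟨t, ht, -⟩ := (hcolor i).resolve_left hi
    exact ⟨t, Finset.mem_filter.2 ⟨Finset.mem_univ _, ht⟩⟩
  have hmin : ∀ i, ∃ z ∈ σ, ∀ t ∈ σ, (z : I → ℝ) i ≤ (t : I → ℝ) i :=
    fun i => σ.exists_min_image (fun t => (t : I → ℝ) i) hσne
  choose z hzσ hz using hmin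
  set C : Finset I := Finset.univ.filter fun i => Sum.inr i ∉ R with hC
  have hCne : C.Nonempty := by
    obtain ⟨i, hi, -⟩ := hdomT ⟨t₀, ht₀⟩
    exact ⟨i, Finset.mem_filter.2 ⟨Finset.mem_univ _, hi⟩⟩
  have hCpos : (0:ℝ) < C.card := by exact_mod_cast hCne.card_pos
  have hsum : 1 - η ≤ ∑ i ∈ C, (z i : I → ℝ) i := by
    by_contra hlt
    push Not at hlt
    set δ : ℝ := (1 - ∑ i ∈ C, (z i : I → ℝ) i) / C.card with hδ
    have hCle : (C.card : ℝ) ≤ Fintype.card I := by exact_mod_cast Finset.card_le_univ C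
    have hδε : ε < δ := by
      rw [hε, hδ]
      calc η / Fintype.card I ≤ η / C.card := by gcongr
        _ < _ := by gcongr; linarith
    let y : I → ℝ := fun i => if i ∈ C then (z i : I → ℝ) i + δ else 0
    have hy : y ∈ stdSimplex ℝ I := by
      constructor
      · intro i
        by_cases h : i ∈ C
        · simp only [y, h, if_true]
          have := hval0 i (z i)
          have h3 : (0:ℝ) ≤ (z i : I → ℝ) i := this
          linarith
        · simp [y, h]
      · simp only [y]
        rw [Finset.sum_ite_mem, Finset.univ_inter, Finset.sum_add_distrib, Finset.sum_const,
          nsmul_eq_mul, hδ]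
        field_simp
        ring
    obtain ⟨x, hxT, hx⟩ := hnet y hy
    obtain ⟨i, hi, hit⟩ := hdomT ⟨x, hxT⟩
    have h1 := hit (z i) ((Finset.mem_filter.1 (hzσ i)).2)
    have h2 := (dist_le_pi_dist y x i).trans_lt hx
    have hiC : i ∈ C := Finset.mem_filter.2 ⟨Finset.mem_univ _, hi⟩
    have hyi : y i = (z i : I → ℝ) i + δ := if_pos hiC
    rw [hyi, Real.dist_eq] at h2
    have := (abs_lt.1 h2).2
    change x i ≤ (z i : I → ℝ) i at h1
    linarith
  have key : ∀ t ∈ σ, (∀ i ∈ C, (t : I → ℝ) i ≤ (z i : I → ℝ) i + η) ∧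
      (∀ i, i ∉ C → (t : I → ℝ) i ≤ η) := by
    intro t ht
    have hts := hTs _ t.2
    have hsplit : ∑ i ∈ C, (t : I → ℝ) i + ∑ i ∈ Cᶜ, (t : I → ℝ) i = 1 := by
      rw [Finset.sum_add_sum_compl]; exact hts.2
    have hcn : 0 ≤ ∑ i ∈ Cᶜ, (t : I → ℝ) i := Finset.sum_nonneg fun i _ => hts.1 i
    constructor
    · intro i hi
      have : (t : I → ℝ) i - (z i : I → ℝ) i ≤ ∑ j ∈ C, ((t : I → ℝ) j - (z j : I → ℝ) j) :=
        Finset.single_le_sum (f := fun j => (t : I → ℝ) j - (z j : I → ℝ) j)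
          (fun j _ => sub_nonneg.2 (hz j t ht)) hi
      rw [Finset.sum_sub_distrib] at this
      linarith
    · intro i hi
      have h1 : (t : I → ℝ) i ≤ ∑ j ∈ Cᶜ, (t : I → ℝ) j :=
        Finset.single_le_sum (f := fun j => (t : I → ℝ) j) (fun j _ => hts.1 j) (by simpa using hi)
      have h2 : ∑ i ∈ C, (z i : I → ℝ) i ≤ ∑ i ∈ C, (t : I → ℝ) i :=
        Finset.sum_le_sum fun j _ => hz j t ht
      linarith
  have hdist : ∀ t ∈ σ, ∀ t' ∈ σ, dist (t : I → ℝ) (t' : I → ℝ) ≤ η := by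
    intro t ht t' ht'
    rw [dist_pi_le_iff hη.le]
    intro i
    rw [Real.dist_eq, abs_le]
    by_cases hi : i ∈ C
    · have h1 := (key t ht).1 i hi
      have h2 := (key t' ht').1 i hi
      have h3 := hz i t ht
      have h4 := hz i t' ht'
      constructor <;> linarith
    · have h1 := (key t ht).2 i hi
      have h2 := (key t' ht').2 i hi
      have h3 := (hTs _ t.2).1 i
      have h4 := (hTs _ t'.2).1 i
      constructor <;> linarith
  obtain ⟨t, ht⟩ := hσne
  refine ⟨t, hTs _ t.2, fun i => ?_⟩
  by_cases hi : i ∈ C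
  · have hi' : Sum.inr i ∉ R := (Finset.mem_filter.1 hi).2
    obtain ⟨t', ht', htc⟩ := (hcolor i).resolve_left hi'
    refine ⟨t', hTs _ t'.2, hdist _ (Finset.mem_filter.2 ⟨Finset.mem_univ _, ht'⟩) _ ht, ?_⟩
    have := hc₀ t'
    rw [htc] at this
    linarith
  · refine ⟨t, hTs _ t.2, by simpa using hη.le, ?_⟩
    have := (key t ht).2 i hi
    have h2 := (hf _ (hTs _ t.2)).1 i
    linarith

theorem simplex_brouwer {I : Type*} [Fintype I] [DecidableEq I] (hI : 2 ≤ Fintype.card I)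
    (f : (I → ℝ) → I → ℝ) (hfc : Continuous f)
    (hf : ∀ x ∈ stdSimplex ℝ I, f x ∈ stdSimplex ℝ I) :
    ∃ x ∈ stdSimplex ℝ I, f x = x := by
  have h := fun n : ℕ => simplex_approx hI f hf (1 / ((n:ℝ) + 1)) (by positivity)
  choose x hxs x' hx's hd hle using h
  obtain ⟨y, hy, φ, hφ, hlim⟩ := (isCompact_stdSimplex ℝ I).tendsto_subseq hxs
  have h0 : Filter.Tendsto (fun n : ℕ => 1 / ((φ n : ℝ) + 1)) Filter.atTop (nhds 0) :=
    (tendsto_one_div_add_atTop_nhds_zero_nat (𝕜 := ℝ)).comp hφ.tendsto_atTop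
  have hlim' : ∀ i, Filter.Tendsto (fun n => x' (φ n) i) Filter.atTop (nhds y) := by
    intro i
    refine hlim.congr_dist ?_
    refine squeeze_zero (fun _ => dist_nonneg) (fun n => ?_) h0
    rw [dist_comm]
    exact hd (φ n) i
  have hge : ∀ i, y i ≤ f y i := by
    intro i
    have h1 : Filter.Tendsto (fun n => x' (φ n) i i) Filter.atTop (nhds (y i)) :=
      ((continuous_apply i).tendsto y).comp (hlim' i)
    have h2 : Filter.Tendsto (fun n => f (x' (φ n) i) i + 1 / ((φ n : ℝ) + 1)) Filter.atTop
        (nhds (f y i + 0)) :=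
      ((((continuous_apply i).comp hfc).tendsto y).comp (hlim' i)).add h0
    rw [add_zero] at h2
    exact le_of_tendsto_of_tendsto' h1 h2 fun n => hle (φ n) i
  refine ⟨y, hy, ?_⟩
  have hs : ∑ i, y i = ∑ i, f y i := by rw [hy.2, (hf y hy).2]
  rw [Finset.sum_eq_sum_iff_of_le fun i _ => hge i] at hs
  exact funext fun i => (hs i (Finset.mem_univ i)).symm

theorem bounded_brouwer_unit {J : Type*} [Fintype J] (G : (J → ℝ) → J → ℝ) (hG : Continuous G)
    (h0 : ∀ x j, 0 ≤ G x j) (h1 : ∀ x j, G x j ≤ 1) : ∃ x, G x = x := by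
  classical
  rcases isEmpty_or_nonempty J with hJ | hJ
  · exact ⟨0, Subsingleton.elim _ _⟩
  have hd : (0:ℝ) < Fintype.card J := by exact_mod_cast Fintype.card_pos
  set d : ℝ := ((Fintype.card J : ℕ) : ℝ) with hdd
  let F : (Option J → ℝ) → Option J → ℝ := fun y o =>
    o.elim (1 - ∑ j, G (fun j => d * y (some j)) j / d) (fun j => G (fun j => d * y (some j)) j / d)
  have hinner : Continuous fun y : Option J → ℝ => G (fun j => d * y (some j)) := by
    apply hG.comp; fun_prop
  have hinner' : ∀ j, Continuous fun y : Option J → ℝ => G (fun j => d * y (some j)) j :=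
    fun j => (continuous_apply j).comp hinner
  have hF : Continuous F := by
    apply continuous_pi
    rintro (_ | j)
    · simp only [F, Option.elim]
      exact continuous_const.sub (continuous_finsetSum _ fun j _ => (hinner' j).div_const d)
    · simp only [F, Option.elim]
      exact (hinner' j).div_const d
  obtain ⟨y, hy, hfy⟩ := simplex_brouwer (I := Option J)
    (by rw [Fintype.card_option]; have := Fintype.card_pos (α := J); omega) F hF (by
      intro y _
      constructor
      · rintro (_ | j)
        · simp only [F, Option.elim, sub_nonneg]
          rw [← Finset.sum_div, div_le_one hd]
          calc _ ≤ ∑ j : J, (1:ℝ) := Finset.sum_le_sum fun j _ => h1 _ j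
            _ = d := by simp [hdd]
        · exact div_nonneg (h0 _ _) hd.le
      · rw [Fintype.sum_option]
        simp [F])
  refine ⟨fun j => d * y (some j), funext fun j => ?_⟩
  have := congrFun hfy (some j)
  simp only [F, Option.elim] at this
  rw [div_eq_iff hd.ne'] at this
  rw [this, mul_comm]

theorem bounded_brouwer {J : Type*} [Fintype J] (G : (J → ℝ) → J → ℝ) (hG : Continuous G)
    (B : ℝ) (hB : ∀ x j, |G x j| ≤ B) : ∃ x, G x = x := by
  rcases isEmpty_or_nonempty J with hJ | ⟨⟨j₀⟩⟩
  · exact ⟨0, Subsingleton.elim _ _⟩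
  have hB0 : 0 ≤ B := (abs_nonneg _).trans (hB 0 j₀)
  have hpos : 0 < 2 * (B + 1) := by linarith
  obtain ⟨x, hx⟩ := bounded_brouwer_unit
    (fun x j => (G (fun j => 2 * (B + 1) * x j - (B + 1)) j + (B + 1)) / (2 * (B + 1)))
    (by
      apply continuous_pi
      intro j
      refine Continuous.div_const (Continuous.add ?_ continuous_const) _
      exact (continuous_apply j).comp (hG.comp (by fun_prop)))
    (fun x j => by
      have := (abs_le.1 (hB (fun j => 2 * (B + 1) * x j - (B + 1)) j)).1
      exact div_nonneg (by linarith) hpos.le)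
    (fun x j => by
      have := (abs_le.1 (hB (fun j => 2 * (B + 1) * x j - (B + 1)) j)).2
      rw [div_le_one hpos]; linarith)
  refine ⟨fun j => 2 * (B + 1) * x j - (B + 1), funext fun j => ?_⟩
  have := congrFun hx j
  rw [div_eq_iff hpos.ne'] at this
  linarith

section Hammerstein

variable {X ι : Type*} [MetricSpace X] [CompactSpace X] [MeasurableSpace X] [BorelSpace X]
  [Fintype ι]

theorem hammerstein_integrable (μ : Measure X) [IsFiniteMeasure μ] (k : C(X, ℝ)) (g : X → ℝ)
    (hg : Measurable g) (B : ℝ) (hB : ∀ s, |g s| ≤ B) : Integrable (fun s => k s * g s) μ := by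
  refine Integrable.of_bound (C := ‖k‖ * B) (k.continuous.measurable.mul hg).aestronglyMeasurable ?_
  refine Filter.Eventually.of_forall fun s => ?_
  rw [norm_mul]
  exact mul_le_mul (k.norm_coe_le_norm s) (hB s) (abs_nonneg _) (norm_nonneg _)

theorem hammerstein_bound (μ : Measure X) [IsFiniteMeasure μ] (k : C(X, ℝ)) (g : X → ℝ)
    (B : ℝ) (hB : ∀ s, |g s| ≤ B) : |∫ s, k s * g s ∂μ| ≤ ‖k‖ * B * μ.real Set.univ := by
  rw [← Real.norm_eq_abs]
  refine norm_integral_le_of_norm_le_const (Filter.Eventually.of_forall fun s => ?_)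
  rw [norm_mul]
  exact mul_le_mul (k.norm_coe_le_norm s) (hB s) (abs_nonneg _) (norm_nonneg _)

theorem hammerstein_simple (μ : Measure X) [IsFiniteMeasure μ] (K : ι → C(X, C(X, ℝ)))
    (F : ι → C(X × (ι → ℝ), ℝ)) (B : ℝ) (hB : ∀ i p, |F i p| ≤ B) (τ : SimpleFunc X X) :
    ∃ u : X → ι → ℝ, ∀ t i, u t i = ∫ s, K i t s * F i (τ s, u (τ s)) ∂μ := by
  classical
  let P : (ι × τ.range → ℝ) → X → ι → ℝ := fun p x k =>
    if h : x ∈ τ.range then p (k, ⟨x, h⟩) else 0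
  have hP : ∀ x, Continuous fun p => P p x := by
    intro x
    apply continuous_pi
    intro k
    by_cases h : x ∈ τ.range
    · simp only [P, h, dif_pos]; fun_prop
    · simp only [P, h, dif_neg, not_false_eq_true]; fun_prop
  have hmeas : ∀ p i, Measurable fun s => F i (τ s, P p (τ s)) := by
    intro p i
    exact (τ.map fun x => F i (x, P p x)).measurable
  let G : (ι × τ.range → ℝ) → ι × τ.range → ℝ := fun p j =>
    ∫ s, K j.1 j.2 s * F j.1 (τ s, P p (τ s)) ∂μ
  have hG : Continuous G := by
    apply continuous_pi
    rintro ⟨i, x⟩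
    refine continuous_of_dominated (bound := fun _ => ‖K i x‖ * B)
      (fun p => ((K i x).continuous.measurable.mul (hmeas p i)).aestronglyMeasurable)
      (fun p => Filter.Eventually.of_forall fun s => ?_) (integrable_const _)
      (Filter.Eventually.of_forall fun s => ?_)
    · rw [norm_mul]
      exact mul_le_mul ((K i x).norm_coe_le_norm s) (hB _ _) (abs_nonneg _) (norm_nonneg _)
    · refine continuous_const.mul ((F i).continuous.comp ?_)
      exact continuous_const.prodMk (hP _)
  have hGb : ∃ C, ∀ p j, |G p j| ≤ C := by
    refine ⟨∑ j : ι × τ.range, ‖K j.1 j.2‖ * |B| * μ.real Set.univ, fun p j => ?_⟩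
    refine (hammerstein_bound μ (K j.1 j.2) _ |B| fun s => (hB _ _).trans (le_abs_self B)).trans ?_
    exact Finset.single_le_sum (f := fun j : ι × τ.range => ‖K j.1 j.2‖ * |B| * μ.real Set.univ)
      (fun j _ => by positivity) (Finset.mem_univ j)
  obtain ⟨C, hC⟩ := hGb
  obtain ⟨p, hp⟩ := bounded_brouwer G hG C hC
  refine ⟨fun t i => ∫ s, K i t s * F i (τ s, P p (τ s)) ∂μ, fun t i => ?_⟩
  refine integral_congr_ae (Filter.Eventually.of_forall fun s => ?_)
  have h : τ s ∈ τ.range := τ.mem_range_self s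
  suffices hs : P p (τ s) = fun i => ∫ s', K i (τ s) s' * F i (τ s', P p (τ s')) ∂μ by
    simp only
    rw [← hs]
  funext k
  have := congrFun hp (k, ⟨τ s, h⟩)
  have h2 : P p (τ s) k = p (k, ⟨τ s, h⟩) := dif_pos h
  rw [h2, ← this]

theorem hammerstein_fixed (μ : Measure X) [IsFiniteMeasure μ] [Nonempty X] (K : ι → C(X, C(X, ℝ)))
    (F : ι → C(X × (ι → ℝ), ℝ)) (B : ℝ) (hB : ∀ i p, |F i p| ≤ B) :
    ∃ u : C(X, ι → ℝ), ∀ t i, u t i = ∫ s, K i t s * F i (s, u s) ∂μ := by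
  classical
  rcases isEmpty_or_nonempty ι with hι | ⟨⟨i₀⟩⟩
  · exact ⟨0, fun t i => isEmptyElim i⟩
  obtain ⟨x₀⟩ := ‹Nonempty X›
  have hB0 : 0 ≤ B := (abs_nonneg _).trans (hB i₀ (x₀, 0))
  have : Nonempty X := ⟨x₀⟩
  let τ : ℕ → SimpleFunc X X := fun n => SimpleFunc.nearestPt (TopologicalSpace.denseSeq X) n
  have hτ : ∀ s, Filter.Tendsto (fun n => τ n s) Filter.atTop (nhds s) := by
    intro s
    apply SimpleFunc.tendsto_nearestPt
    rw [(TopologicalSpace.denseRange_denseSeq X).closure_range]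
    trivial
  choose u hu using fun n => hammerstein_simple μ K F B hB (τ n)
  set M := μ.real Set.univ with hM
  have hM0 : 0 ≤ M := measureReal_nonneg
  have hmeas : ∀ n i, Measurable fun s => F i (τ n s, u n (τ n s)) := fun n i =>
    ((τ n).map fun x => F i (x, u n x)).measurable
  let b : X → X → ℝ := fun t t' => ∑ i, ‖K i t - K i t'‖ * B * M
  have hb0 : ∀ t t', 0 ≤ b t t' := fun t t' => Finset.sum_nonneg fun i _ => by positivity
  have hdist : ∀ n t t', dist (u n t) (u n t') ≤ b t t' := by
    intro n t t'
    rw [dist_pi_le_iff (hb0 t t')]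
    intro i
    rw [Real.dist_eq, hu n t i, hu n t' i, ← integral_sub
      (hammerstein_integrable μ (K i t) _ (hmeas n i) B fun s => hB _ _)
      (hammerstein_integrable μ (K i t') _ (hmeas n i) B fun s => hB _ _)]
    have h1 := hammerstein_bound μ (K i t - K i t') (fun s => F i (τ n s, u n (τ n s))) B
      fun s => hB _ _
    simp only [ContinuousMap.sub_apply, sub_mul] at h1
    exact h1.trans (Finset.single_le_sum (f := fun i => ‖K i t - K i t'‖ * B * M)
      (fun i _ => by positivity) (Finset.mem_univ i))
  have hblim : ∀ t, Filter.Tendsto (b t) (nhds t) (nhds 0) := by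
    intro t
    have : Continuous (b t) := by
      refine continuous_finsetSum _ fun i _ => ?_
      exact (((continuous_const.sub (K i).continuous).norm).mul continuous_const).mul continuous_const
    have h := this.tendsto t
    simpa [b] using h
  have hcont : ∀ n, Continuous (u n) := by
    intro n
    rw [continuous_iff_continuousAt]
    intro t
    rw [ContinuousAt, tendsto_iff_dist_tendsto_zero]
    exact squeeze_zero (fun _ => dist_nonneg) (fun t' => by rw [dist_comm]; exact hdist n t t') (hblim t)
  let U : ℕ → BoundedContinuousFunction X (ι → ℝ) := fun n =>
    BoundedContinuousFunction.mkOfCompact ⟨u n, hcont n⟩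
  have hUapp : ∀ n t, U n t = u n t := fun n t => rfl
  set D := ∑ i, ‖K i‖ * B * M with hD
  have hD0 : 0 ≤ D := Finset.sum_nonneg fun i _ => by positivity
  have hcpt : IsCompact (closure (Set.range U)) := by
    refine BoundedContinuousFunction.arzela_ascoli (Metric.closedBall 0 D)
      (isCompact_closedBall _ _) _ ?_ ?_
    · rintro _ t ⟨n, rfl⟩
      rw [mem_closedBall_zero_iff, hUapp, pi_norm_le_iff_of_nonneg hD0]
      intro i
      rw [hu n t i]
      refine (hammerstein_bound μ (K i t) _ B fun s => hB _ _).trans ?_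
      refine le_trans ?_ (Finset.single_le_sum (f := fun i => ‖K i‖ * B * M)
        (fun i _ => by positivity) (Finset.mem_univ i))
      have := (K i).norm_coe_le_norm t
      gcongr
    · intro t
      refine Metric.equicontinuousAt_of_continuity_modulus (b t) (hblim t) _ ?_
      refine Filter.Eventually.of_forall fun t' => ?_
      rintro ⟨_, n, rfl⟩
      exact hdist n t t'
  obtain ⟨W, -, φ, hφ, hlim⟩ := hcpt.tendsto_subseq fun n => subset_closure (Set.mem_range_self n)
  have hptw : ∀ t, Filter.Tendsto (fun n => u (φ n) t) Filter.atTop (nhds (W t)) := by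
    intro t
    exact ((continuous_eval_const (F := BoundedContinuousFunction X (ι → ℝ)) t).tendsto W).comp hlim
  have hptwτ : ∀ s, Filter.Tendsto (fun n => u (φ n) (τ (φ n) s)) Filter.atTop (nhds (W s)) := by
    intro s
    refine (hptw s).congr_dist ?_
    exact squeeze_zero (fun _ => dist_nonneg) (fun n => hdist _ _ _)
      ((hblim s).comp ((hτ s).comp hφ.tendsto_atTop))
  refine ⟨W.toContinuousMap, fun t i => ?_⟩
  have h1 : Filter.Tendsto (fun n => u (φ n) t i) Filter.atTop (nhds (W t i)) :=
    ((continuous_apply i).tendsto _).comp (hptw t)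
  have h2 : Filter.Tendsto (fun n => u (φ n) t i) Filter.atTop
      (nhds (∫ s, K i t s * F i (s, W s) ∂μ)) := by
    simp_rw [hu]
    refine tendsto_integral_of_dominated_convergence (fun _ => ‖K i t‖ * B)
      (fun n => ((K i t).continuous.measurable.mul (hmeas (φ n) i)).aestronglyMeasurable)
      (integrable_const _) (fun n => Filter.Eventually.of_forall fun s => ?_)
      (Filter.Eventually.of_forall fun s => ?_)
    · rw [norm_mul]
      exact mul_le_mul ((K i t).norm_coe_le_norm s) (hB _ _) (abs_nonneg _) (norm_nonneg _)
    · refine Filter.Tendsto.const_mul _ ?_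
      exact ((F i).continuous.tendsto _).comp
        (((hτ s).comp hφ.tendsto_atTop).prodMk_nhds (hptwτ s))
  exact tendsto_nhds_unique h1 h2

end Hammerstein

theorem int01 (g : ℝ → ℝ) : ∫ s in (0:ℝ)..1, g s = ∫ s in Set.Icc (0:ℝ) 1, g s := by
  rw [intervalIntegral.integral_of_le zero_le_one, integral_Icc_eq_integral_Ioc]

theorem hammerstein_pair (k₁ k₂ : ℝ → ℝ → ℝ) (g₁ g₂ : ℝ → ℝ → ℝ → ℝ)
    (hk₁ : ContinuousOn (fun p : ℝ × ℝ => k₁ p.1 p.2) (Set.Icc 0 1 ×ˢ Set.Icc 0 1))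
    (hk₂ : ContinuousOn (fun p : ℝ × ℝ => k₂ p.1 p.2) (Set.Icc 0 1 ×ˢ Set.Icc 0 1))
    (hg₁ : ContinuousOn (fun p : ℝ × ℝ × ℝ => g₁ p.1 p.2.1 p.2.2)
      (Set.Icc 0 1 ×ˢ (Set.univ : Set (ℝ × ℝ))))
    (hg₂ : ContinuousOn (fun p : ℝ × ℝ × ℝ => g₂ p.1 p.2.1 p.2.2)
      (Set.Icc 0 1 ×ˢ (Set.univ : Set (ℝ × ℝ))))
    (B : ℝ) (hB₁ : ∀ t ∈ Set.Icc (0:ℝ) 1, ∀ x y, |g₁ t x y| ≤ B)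
    (hB₂ : ∀ t ∈ Set.Icc (0:ℝ) 1, ∀ x y, |g₂ t x y| ≤ B) :
    ∃ u v : ℝ → ℝ, Continuous u ∧ Continuous v ∧ isSolution k₁ k₂ g₁ g₂ u v := by
  have hK : ∀ k : ℝ → ℝ → ℝ,
      ContinuousOn (fun p : ℝ × ℝ => k p.1 p.2) (Set.Icc 0 1 ×ˢ Set.Icc 0 1) →
      ∃ K : C(Set.Icc (0:ℝ) 1, C(Set.Icc (0:ℝ) 1, ℝ)), ∀ t s, K t s = k t s := by
    intro k hk
    have hc : Continuous fun p : Set.Icc (0:ℝ) 1 × Set.Icc (0:ℝ) 1 => k p.1 p.2 :=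
      hk.comp_continuous (f := fun p : Set.Icc (0:ℝ) 1 × Set.Icc (0:ℝ) 1 => ((p.1 : ℝ), (p.2 : ℝ)))
        (by fun_prop) (fun p => ⟨p.1.2, p.2.2⟩)
    exact ⟨ContinuousMap.curry ⟨_, hc⟩, fun t s => rfl⟩
  have hF : ∀ g : ℝ → ℝ → ℝ → ℝ, ContinuousOn (fun p : ℝ × ℝ × ℝ => g p.1 p.2.1 p.2.2)
      (Set.Icc 0 1 ×ˢ (Set.univ : Set (ℝ × ℝ))) →
      ∃ F : C(Set.Icc (0:ℝ) 1 × (Bool → ℝ), ℝ), ∀ p, F p = g p.1 (p.2 true) (p.2 false) := by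
    intro g hg
    have hc : Continuous fun p : Set.Icc (0:ℝ) 1 × (Bool → ℝ) => g p.1 (p.2 true) (p.2 false) :=
      hg.comp_continuous
        (f := fun p : Set.Icc (0:ℝ) 1 × (Bool → ℝ) => ((p.1 : ℝ), (p.2 true, p.2 false)))
        (by fun_prop) (fun p => ⟨p.1.2, trivial⟩)
    exact ⟨⟨_, hc⟩, fun p => rfl⟩
  obtain ⟨K₁, hK₁⟩ := hK k₁ hk₁
  obtain ⟨K₂, hK₂⟩ := hK k₂ hk₂
  obtain ⟨F₁, hF₁⟩ := hF g₁ hg₁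
  obtain ⟨F₂, hF₂⟩ := hF g₂ hg₂
  obtain ⟨U, hU⟩ := hammerstein_fixed (X := Set.Icc (0:ℝ) 1) (ι := Bool) volume
    (fun b => if b then K₁ else K₂) (fun b => if b then F₁ else F₂) B (by
      rintro (_ | _) p
      · simp [hF₂]; exact hB₂ _ p.1.2 _ _
      · simp [hF₁]; exact hB₁ _ p.1.2 _ _)
  refine ⟨fun t => U (Set.projIcc 0 1 zero_le_one t) true,
    fun t => U (Set.projIcc 0 1 zero_le_one t) false, ?_, ?_, ?_, ?_⟩
  · exact (continuous_apply _).comp (U.continuous.comp continuous_projIcc)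
  · exact (continuous_apply _).comp (U.continuous.comp continuous_projIcc)
  · intro t ht
    have := hU ⟨t, ht⟩ true
    simp only [if_true, hK₁, hF₁] at this
    rw [int01, ← integral_subtype_comap measurableSet_Icc]
    simp only [Set.projIcc_of_mem zero_le_one ht, Set.projIcc_val]
    exact this
  · intro t ht
    have := hU ⟨t, ht⟩ false
    simp only [Bool.false_eq_true, if_false, hK₂, hF₂] at this
    rw [int01, ← integral_subtype_comap measurableSet_Icc]
    simp only [Set.projIcc_of_mem zero_le_one ht, Set.projIcc_val]
    exact this

theorem slice_cont (k : ℝ → ℝ → ℝ)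
    (hk : ContinuousOn (fun p : ℝ × ℝ => k p.1 p.2) (Set.Icc 0 1 ×ˢ Set.Icc 0 1))
    (t : ℝ) (ht : t ∈ Set.Icc (0:ℝ) 1) : ContinuousOn (k t) (Set.Icc 0 1) :=
  hk.comp (f := fun s : ℝ => (t, s)) (by fun_prop) (fun s hs => ⟨ht, hs⟩)

theorem comp_bound (k : ℝ → ℝ → ℝ)
    (hk : ContinuousOn (fun p : ℝ × ℝ => k p.1 p.2) (Set.Icc 0 1 ×ˢ Set.Icc 0 1))
    (m : ℝ) (hm : 0 < m) (hmeq : 1 / m = ⨆ t : Set.Icc (0:ℝ) 1, ∫ s in (0:ℝ)..1, |k t.1 s|)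
    (h : ℝ → ℝ) (r : ℝ) (hr : 0 < r) (hb : ∀ s ∈ Set.Icc (0:ℝ) 1, |h s| ≤ m * r)
    (t : ℝ) (ht : t ∈ Set.Icc (0:ℝ) 1) : |∫ s in (0:ℝ)..1, k t s * h s| ≤ r := by
  obtain ⟨C, hC⟩ := (isCompact_Icc.prod isCompact_Icc).exists_bound_of_continuousOn hk
  have hki : ∀ t ∈ Set.Icc (0:ℝ) 1, IntegrableOn (fun s => |k t s|) (Set.Icc 0 1) := fun t ht =>
    ((slice_cont k hk t ht).abs).integrableOn_compact isCompact_Icc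
  have hbdd : BddAbove (Set.range fun t : Set.Icc (0:ℝ) 1 => ∫ s in (0:ℝ)..1, |k t.1 s|) := by
    refine ⟨C, ?_⟩
    rintro _ ⟨t, rfl⟩
    simp only
    rw [int01]
    calc ∫ s in Set.Icc (0:ℝ) 1, |k t.1 s| ≤ ∫ s in Set.Icc (0:ℝ) 1, C :=
          setIntegral_mono_on (hki t.1 t.2) (by simp) measurableSet_Icc
            fun s hs => hC (t.1, s) ⟨t.2, hs⟩
      _ = C := by simp
  have h1 : ∫ s in (0:ℝ)..1, |k t s| ≤ 1 / m := by
    rw [hmeq]; exact le_ciSup hbdd ⟨t, ht⟩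
  rw [int01] at h1 ⊢
  calc |∫ s in Set.Icc (0:ℝ) 1, k t s * h s| ≤ ∫ s in Set.Icc (0:ℝ) 1, |k t s| * (m * r) := by
        rw [← Real.norm_eq_abs]
        refine norm_integral_le_of_norm_le ((hki t ht).mul_const _) ?_
        refine (ae_restrict_iff' measurableSet_Icc).2 (Filter.Eventually.of_forall fun s hs => ?_)
        rw [norm_mul]
        exact mul_le_mul_of_nonneg_left (hb s hs) (abs_nonneg _)
    _ = (∫ s in Set.Icc (0:ℝ) 1, |k t s|) * (m * r) := integral_mul_const _ _
    _ ≤ 1 / m * (m * r) := by gcongr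
    _ = r := by field_simp

theorem comp_cone (k : ℝ → ℝ → ℝ) (Φ : ℝ → ℝ) (a b c : ℝ)
    (hk : ContinuousOn (fun p : ℝ × ℝ => k p.1 p.2) (Set.Icc 0 1 ×ˢ Set.Icc 0 1))
    (ha : 0 ≤ a) (hab : a ≤ b) (hb : b ≤ 1) (hc : c ∈ Set.Ioc (0:ℝ) 1)
    (hΦmeas : Measurable Φ) (hΦnn : ∀ s ∈ Set.Icc (0:ℝ) 1, 0 ≤ Φ s)
    (hΦbdd : ∃ C : ℝ, ∀ᵐ s ∂(volume.restrict (Set.Icc (0:ℝ) 1)), |Φ s| ≤ C)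
    (hΦpos : 0 < ∫ s in a..b, Φ s)
    (hub : ∀ t ∈ Set.Icc (0:ℝ) 1, ∀ᵐ s ∂(volume.restrict (Set.Icc (0:ℝ) 1)), |k t s| ≤ Φ s)
    (hlb : ∀ t ∈ Set.Icc a b, ∀ᵐ s ∂(volume.restrict (Set.Icc (0:ℝ) 1)), c * Φ s ≤ k t s)
    (h : ℝ → ℝ) (hh : ContinuousOn h (Set.Icc 0 1)) (hnn : ∀ s ∈ Set.Icc (0:ℝ) 1, 0 ≤ h s)
    (w : ℝ → ℝ) (hw : ∀ t ∈ Set.Icc (0:ℝ) 1, w t = ∫ s in (0:ℝ)..1, k t s * h s) :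
    c * supNorm w ≤ infOn a b w ∧
      ∀ δ, 0 < δ → (∀ s ∈ Set.Icc a b, δ ≤ h s) → 0 < w a := by
  obtain ⟨C, hC⟩ := hΦbdd
  have hsub : Set.Icc a b ⊆ Set.Icc (0:ℝ) 1 := Set.Icc_subset_Icc ha hb
  have hΦint : IntegrableOn Φ (Set.Icc 0 1) :=
    Integrable.of_bound (C := C) hΦmeas.aestronglyMeasurable hC
  have hΦh : IntegrableOn (fun s => Φ s * h s) (Set.Icc 0 1) :=
    hΦint.mul_continuousOn hh isCompact_Icc
  have hkh : ∀ t ∈ Set.Icc (0:ℝ) 1, IntegrableOn (fun s => k t s * h s) (Set.Icc 0 1) :=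
    fun t ht => ((slice_cont k hk t ht).mul hh).integrableOn_compact isCompact_Icc
  have hmem : ∀ᵐ s ∂(volume.restrict (Set.Icc (0:ℝ) 1)), s ∈ Set.Icc (0:ℝ) 1 :=
    ae_restrict_mem measurableSet_Icc
  have hup : ∀ t ∈ Set.Icc (0:ℝ) 1, |w t| ≤ ∫ s in Set.Icc (0:ℝ) 1, Φ s * h s := by
    intro t ht
    rw [hw t ht, int01, ← Real.norm_eq_abs]
    refine norm_integral_le_of_norm_le hΦh ?_
    filter_upwards [hub t ht, hmem] with s hs hs'
    rw [norm_mul, Real.norm_eq_abs, Real.norm_eq_abs, abs_of_nonneg (hnn s hs')]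
    exact mul_le_mul_of_nonneg_right hs (hnn s hs')
  have hlow : ∀ t ∈ Set.Icc a b, c * ∫ s in Set.Icc (0:ℝ) 1, Φ s * h s ≤ w t := by
    intro t ht
    rw [hw t (hsub ht), int01, ← integral_const_mul]
    refine integral_mono_ae (hΦh.const_mul c) (hkh t (hsub ht)) ?_
    filter_upwards [hlb t ht, hmem] with s hs hs'
    rw [← mul_assoc]
    exact mul_le_mul_of_nonneg_right hs (hnn s hs')
  have hneI : Nonempty (Set.Icc (0:ℝ) 1) := ⟨⟨0, by simp⟩⟩
  have hneab : Nonempty (Set.Icc a b) := ⟨⟨a, by simp [hab]⟩⟩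
  constructor
  · refine le_ciInf fun t => le_trans ?_ (hlow t.1 t.2)
    exact mul_le_mul_of_nonneg_left (ciSup_le fun t' => hup t'.1 t'.2) hc.1.le
  · intro δ hδ hδh
    have hmab : a ∈ Set.Icc a b := by simp [hab]
    refine lt_of_lt_of_le ?_ (hlow a hmab)
    refine mul_pos hc.1 ?_
    have h1 : ∫ s in Set.Icc a b, Φ s * δ ≤ ∫ s in Set.Icc (0:ℝ) 1, Φ s * h s := by
      calc ∫ s in Set.Icc a b, Φ s * δ ≤ ∫ s in Set.Icc a b, Φ s * h s :=
            setIntegral_mono_on ((hΦint.mono_set hsub).mul_const _) (hΦh.mono_set hsub)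
              measurableSet_Icc fun s hs => mul_le_mul_of_nonneg_left (hδh s hs) (hΦnn s (hsub hs))
        _ ≤ _ := by
            refine setIntegral_mono_set hΦh ?_ hsub.eventuallyLE
            filter_upwards [hmem] with s hs
            exact mul_nonneg (hΦnn s hs) (hnn s hs)
    refine lt_of_lt_of_le ?_ h1
    rw [integral_mul_const, integral_Icc_eq_integral_Ioc, ← intervalIntegral.integral_of_le hab]
    exact mul_pos hΦpos hδ

theorem existence_S1_star
    (k₁ k₂ : ℝ → ℝ → ℝ) (f₁ f₂ : ℝ → ℝ → ℝ → ℝ) (Φ₁ Φ₂ : ℝ → ℝ)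
    (a₁ b₁ c₁ a₂ b₂ c₂ : ℝ)
    (hk₁ : ContinuousOn (fun p : ℝ × ℝ => k₁ p.1 p.2) (Set.Icc 0 1 ×ˢ Set.Icc 0 1))
    (hk₂ : ContinuousOn (fun p : ℝ × ℝ => k₂ p.1 p.2) (Set.Icc 0 1 ×ˢ Set.Icc 0 1))
    (ha₁ : 0 ≤ a₁) (hab₁ : a₁ ≤ b₁) (hb₁ : b₁ ≤ 1)
    (ha₂ : 0 ≤ a₂) (hab₂ : a₂ ≤ b₂) (hb₂ : b₂ ≤ 1)
    (hc₁ : c₁ ∈ Set.Ioc (0:ℝ) 1) (hc₂ : c₂ ∈ Set.Ioc (0:ℝ) 1)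
    (hΦ₁meas : Measurable Φ₁) (hΦ₂meas : Measurable Φ₂)
    (hΦ₁nn : ∀ s ∈ Set.Icc (0:ℝ) 1, 0 ≤ Φ₁ s) (hΦ₂nn : ∀ s ∈ Set.Icc (0:ℝ) 1, 0 ≤ Φ₂ s)
    (hΦ₁bdd : ∃ C : ℝ, ∀ᵐ s ∂(volume.restrict (Set.Icc (0:ℝ) 1)), |Φ₁ s| ≤ C)
    (hΦ₂bdd : ∃ C : ℝ, ∀ᵐ s ∂(volume.restrict (Set.Icc (0:ℝ) 1)), |Φ₂ s| ≤ C)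
    (hΦ₁pos : 0 < ∫ s in a₁..b₁, Φ₁ s) (hΦ₂pos : 0 < ∫ s in a₂..b₂, Φ₂ s)
    (hub₁ : ∀ t ∈ Set.Icc (0:ℝ) 1, ∀ᵐ s ∂(volume.restrict (Set.Icc (0:ℝ) 1)), |k₁ t s| ≤ Φ₁ s)
    (hub₂ : ∀ t ∈ Set.Icc (0:ℝ) 1, ∀ᵐ s ∂(volume.restrict (Set.Icc (0:ℝ) 1)), |k₂ t s| ≤ Φ₂ s)
    (hlb₁ : ∀ t ∈ Set.Icc a₁ b₁, ∀ᵐ s ∂(volume.restrict (Set.Icc (0:ℝ) 1)), c₁ * Φ₁ s ≤ k₁ t s)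
    (hlb₂ : ∀ t ∈ Set.Icc a₂ b₂, ∀ᵐ s ∂(volume.restrict (Set.Icc (0:ℝ) 1)), c₂ * Φ₂ s ≤ k₂ t s)
    (hf₁ : ContinuousOn (fun p : ℝ × ℝ × ℝ => f₁ p.1 p.2.1 p.2.2)
      (Set.Icc 0 1 ×ˢ (Set.univ : Set (ℝ × ℝ))))
    (hf₂ : ContinuousOn (fun p : ℝ × ℝ × ℝ => f₂ p.1 p.2.1 p.2.2)
      (Set.Icc 0 1 ×ˢ (Set.univ : Set (ℝ × ℝ))))
    (hf₁nn : ∀ t ∈ Set.Icc (0:ℝ) 1, ∀ x y : ℝ, 0 ≤ f₁ t x y)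
    (hf₂nn : ∀ t ∈ Set.Icc (0:ℝ) 1, ∀ x y : ℝ, 0 ≤ f₂ t x y)
    (m₁ m₂ M₁ M₂ : ℝ)
    (hm₁pos : 0 < m₁) (hm₂pos : 0 < m₂)
    (hm₁ : 1 / m₁ = ⨆ t : Set.Icc (0:ℝ) 1, ∫ s in (0:ℝ)..1, |k₁ t.1 s|)
    (hm₂ : 1 / m₂ = ⨆ t : Set.Icc (0:ℝ) 1, ∫ s in (0:ℝ)..1, |k₂ t.1 s|)
    (hM₁pos : 0 < M₁) (hM₂pos : 0 < M₂)
    (hinf₁pos : 0 < ⨅ t : Set.Icc a₁ b₁, ∫ s in a₁..b₁, k₁ t.1 s)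
    (hinf₂pos : 0 < ⨅ t : Set.Icc a₂ b₂, ∫ s in a₂..b₂, k₂ t.1 s)
    (hM₁ : 1 / M₁ = ⨅ t : Set.Icc a₁ b₁, ∫ s in a₁..b₁, k₁ t.1 s)
    (hM₂ : 1 / M₂ = ⨅ t : Set.Icc a₂ b₂, ∫ s in a₂..b₂, k₂ t.1 s)
    (ρ₁ ρ₂ r₁ r₂ : ℝ) (hρ₁ : 0 < ρ₁) (hρ₂ : 0 < ρ₂) (hr₁pos : 0 < r₁) (hr₂pos : 0 < r₂)
    (hr₁ : ρ₁ / c₁ < r₁) (hr₂ : ρ₂ / c₂ < r₂)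
    (hI0 : condI0star f₁ f₂ a₁ b₁ c₁ a₂ b₂ c₂ M₁ M₂ ρ₁ ρ₂)
    (hI1 : condI1 f₁ f₂ m₁ m₂ r₁ r₂)
    :
    ∃ u v : ℝ → ℝ, nontrivialSolution k₁ k₂ f₁ f₂ a₁ b₁ c₁ a₂ b₂ c₂ u v := by
  classical
  let cl : ℝ → ℝ → ℝ := fun r x => max (-r) (min r x)
  have hclm : ∀ r, 0 < r → ∀ x, cl r x ∈ Set.Icc (-r) r := by
    intro r hr x
    exact ⟨le_max_left _ _, max_le (by linarith) (min_le_left _ _)⟩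
  have hcle : ∀ r x, |x| ≤ r → cl r x = x := by
    intro r x hx
    obtain ⟨h1, h2⟩ := abs_le.1 hx
    simp only [cl]
    rw [min_eq_right h2, max_eq_right h1]
  have hclc : ∀ r, Continuous (cl r) := fun r =>
    continuous_const.max (continuous_const.min continuous_id)
  have hgc : ∀ f : ℝ → ℝ → ℝ → ℝ, ContinuousOn (fun p : ℝ × ℝ × ℝ => f p.1 p.2.1 p.2.2)
      (Set.Icc 0 1 ×ˢ (Set.univ : Set (ℝ × ℝ))) →
      ContinuousOn (fun p : ℝ × ℝ × ℝ => f p.1 (cl r₁ p.2.1) (cl r₂ p.2.2))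
      (Set.Icc 0 1 ×ˢ (Set.univ : Set (ℝ × ℝ))) := by
    intro f hf
    refine hf.comp (f := fun p : ℝ × ℝ × ℝ => (p.1, (cl r₁ p.2.1, cl r₂ p.2.2))) ?_ ?_
    · have h1 := hclc r₁
      have h2 := hclc r₂
      exact (by fun_prop : Continuous _).continuousOn
    · intro p hp; exact ⟨hp.1, trivial⟩
  have hfb₁ : ∀ t ∈ Set.Icc (0:ℝ) 1, ∀ x y, |f₁ t (cl r₁ x) (cl r₂ y)| ≤ m₁ * r₁ := by
    intro t ht x y
    rw [abs_of_nonneg (hf₁nn t ht _ _)]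
    exact (hI1 t ht _ (hclm r₁ hr₁pos x) _ (hclm r₂ hr₂pos y)).1.le
  have hfb₂ : ∀ t ∈ Set.Icc (0:ℝ) 1, ∀ x y, |f₂ t (cl r₁ x) (cl r₂ y)| ≤ m₂ * r₂ := by
    intro t ht x y
    rw [abs_of_nonneg (hf₂nn t ht _ _)]
    exact (hI1 t ht _ (hclm r₁ hr₁pos x) _ (hclm r₂ hr₂pos y)).2.le
  obtain ⟨u, v, hu, hv, hsu, hsv⟩ := hammerstein_pair k₁ k₂
    (fun t x y => f₁ t (cl r₁ x) (cl r₂ y)) (fun t x y => f₂ t (cl r₁ x) (cl r₂ y))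
    hk₁ hk₂ (hgc f₁ hf₁) (hgc f₂ hf₂) (max (m₁ * r₁) (m₂ * r₂))
    (fun t ht x y => (hfb₁ t ht x y).trans (le_max_left _ _))
    (fun t ht x y => (hfb₂ t ht x y).trans (le_max_right _ _))
  have hub : ∀ t ∈ Set.Icc (0:ℝ) 1, |u t| ≤ r₁ := by
    intro t ht
    rw [hsu t ht]
    exact comp_bound k₁ hk₁ m₁ hm₁pos hm₁ _ r₁ hr₁pos (fun s hs => hfb₁ s hs _ _) t ht
  have hvb : ∀ t ∈ Set.Icc (0:ℝ) 1, |v t| ≤ r₂ := by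
    intro t ht
    rw [hsv t ht]
    exact comp_bound k₂ hk₂ m₂ hm₂pos hm₂ _ r₂ hr₂pos (fun s hs => hfb₂ s hs _ _) t ht
  have hsol : isSolution k₁ k₂ f₁ f₂ u v := by
    constructor
    · intro t ht
      rw [hsu t ht, int01, int01]
      refine setIntegral_congr_fun measurableSet_Icc fun s hs => ?_
      simp only
      rw [hcle _ _ (hub s hs), hcle _ _ (hvb s hs)]
    · intro t ht
      rw [hsv t ht, int01, int01]
      refine setIntegral_congr_fun measurableSet_Icc fun s hs => ?_
      simp only
      rw [hcle _ _ (hub s hs), hcle _ _ (hvb s hs)]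
  have hhc : ∀ f : ℝ → ℝ → ℝ → ℝ, ContinuousOn (fun p : ℝ × ℝ × ℝ => f p.1 p.2.1 p.2.2)
      (Set.Icc 0 1 ×ˢ (Set.univ : Set (ℝ × ℝ))) →
      ContinuousOn (fun s => f s (u s) (v s)) (Set.Icc 0 1) := by
    intro f hf
    refine hf.comp (f := fun s : ℝ => (s, (u s, v s))) ?_ ?_
    · exact (by fun_prop : Continuous _).continuousOn
    · intro p hp; exact ⟨hp, trivial⟩
  obtain ⟨hc1, hp1⟩ := comp_cone k₁ Φ₁ a₁ b₁ c₁ hk₁ ha₁ hab₁ hb₁ hc₁ hΦ₁meas hΦ₁nn hΦ₁bdd hΦ₁pos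
    hub₁ hlb₁ (fun s => f₁ s (u s) (v s)) (hhc f₁ hf₁) (fun s hs => hf₁nn s hs _ _) u hsol.1
  obtain ⟨hc2, hp2⟩ := comp_cone k₂ Φ₂ a₂ b₂ c₂ hk₂ ha₂ hab₂ hb₂ hc₂ hΦ₂meas hΦ₂nn hΦ₂bdd hΦ₂pos
    hub₂ hlb₂ (fun s => f₂ s (u s) (v s)) (hhc f₂ hf₂) (fun s hs => hf₂nn s hs _ _) v hsol.2
  refine ⟨u, v, ⟨hu.continuousOn, hv.continuousOn, hc1, hc2⟩, hsol, ?_⟩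
  by_contra hcon
  push Not at hcon
  have hsn : ∀ (x : ℝ → ℝ) (r : ℝ), (∀ t ∈ Set.Icc (0:ℝ) 1, |x t| ≤ r) → supNorm x ≤ 0 →
      ∀ t ∈ Set.Icc (0:ℝ) 1, x t = 0 := by
    intro x r hx h0 t ht
    have hbd : BddAbove (Set.range fun t : Set.Icc (0:ℝ) 1 => |x t.1|) :=
      ⟨r, by rintro _ ⟨t, rfl⟩; exact hx t.1 t.2⟩
    have h1 : |x t| ≤ supNorm x := le_ciSup hbd ⟨t, ht⟩
    exact abs_eq_zero.1 (le_antisymm (h1.trans h0) (abs_nonneg _))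
  have hu0 := hsn u r₁ hub ((le_max_left _ _).trans hcon)
  have hv0 := hsn v r₂ hvb ((le_max_right _ _).trans hcon)
  have hq1 : 0 ≤ ρ₁ / c₁ := div_nonneg hρ₁.le hc₁.1.le
  have hq2 : 0 ≤ ρ₂ / c₂ := div_nonneg hρ₂.le hc₂.1.le
  rcases hI0 with hI0 | hI0
  · have hpos := hp1 (M₁ * ρ₁) (mul_pos hM₁pos hρ₁) (fun s hs => by
      have hs' : s ∈ Set.Icc (0:ℝ) 1 := ⟨ha₁.trans hs.1, hs.2.trans hb₁⟩
      rw [hu0 s hs', hv0 s hs']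
      exact (hI0 s hs 0 ⟨le_rfl, hq1⟩ 0 ⟨by linarith, hq2⟩).le)
    rw [hu0 a₁ ⟨ha₁, hab₁.trans hb₁⟩] at hpos
    exact lt_irrefl _ hpos
  · have hpos := hp2 (M₂ * ρ₂) (mul_pos hM₂pos hρ₂) (fun s hs => by
      have hs' : s ∈ Set.Icc (0:ℝ) 1 := ⟨ha₂.trans hs.1, hs.2.trans hb₂⟩
      rw [hu0 s hs', hv0 s hs']
      exact (hI0 s hs 0 ⟨by linarith, hq1⟩ 0 ⟨le_rfl, hq2⟩).le)
    rw [hv0 a₂ ⟨ha₂, hab₂.trans hb₂⟩] at hpos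
    exact lt_irrefl _ hpos
end
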